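/- Let σ > 0 and N ≥ 1 an integer. Then there exists a nondecreasing, Lipschitz-continuous function F : ℝ → ℝ with m < F(x) < M for all x ∈ ℝ which solves equation (E). -/

import Mathlib

open MeasureTheory Filter Set

/-- Centered Gaussian density with variance `σ²`. -/
noncomputable def gq (σ z : ℝ) : ℝ :=
  Real.exp (-(z ^ 2) / (2 * σ ^ 2)) / (σ * Real.sqrt (2 * Real.pi))

/-- The averaged kernel `q̄(σ,x,z)`. -/
noncomputable def gqbar (σ x z : ℝ) : ℝ :=
  if x = 0 then gq σ z else (1 / x) * ∫ y in (0:ℝ)..x, gq σ (y - z)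

/-- `Φ⁺(y) = E[V·1_{V>y}]`. -/
noncomputable def Phip {Ω : Type*} [MeasurableSpace Ω] (P : Measure Ω) (V : Ω → ℝ) (y : ℝ) : ℝ :=
  ∫ ω in {ω | V ω > y}, V ω ∂P

/-- `Π⁺(y) = P(V > y)`. -/
noncomputable def Pip {Ω : Type*} [MeasurableSpace Ω] (P : Measure Ω) (V : Ω → ℝ) (y : ℝ) : ℝ :=
  (P {ω | V ω > y}).toReal

/-- `Φ⁻(y) = E[V·1_{V≤y}]`. -/
noncomputable def Phim {Ω : Type*} [MeasurableSpace Ω] (P : Measure Ω) (V : Ω → ℝ) (y : ℝ) : ℝ :=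
  ∫ ω in {ω | V ω ≤ y}, V ω ∂P

/-- `Π⁻(y) = P(V ≤ y)`. -/
noncomputable def Pim {Ω : Type*} [MeasurableSpace Ω] (P : Measure Ω) (V : Ω → ℝ) (y : ℝ) : ℝ :=
  (P {ω | V ω ≤ y}).toReal

/-- `Ψ⁺ = Φ⁺/Π⁺`. -/
noncomputable def Psip {Ω : Type*} [MeasurableSpace Ω] (P : Measure Ω) (V : Ω → ℝ) (y : ℝ) : ℝ :=
  Phip P V y / Pip P V y

/-- `Ψ⁻ = Φ⁻/Π⁻`. -/
noncomputable def Psim {Ω : Type*} [MeasurableSpace Ω] (P : Measure Ω) (V : Ω → ℝ) (y : ℝ) : ℝ :=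
  Phim P V y / Pim P V y

/-- `φ⁺_g`. -/
noncomputable def phip {Ω : Type*} [MeasurableSpace Ω] (P : Measure Ω) (V : Ω → ℝ)
    (σ : ℝ) (g : ℝ → ℝ) (x : ℝ) : ℝ :=
  (∫ z, Phip P V (g z) * gq σ (x - z)) / (∫ z, Pip P V (g z) * gq σ (x - z))

/-- `φ⁻_g`. -/
noncomputable def phim {Ω : Type*} [MeasurableSpace Ω] (P : Measure Ω) (V : Ω → ℝ)
    (σ : ℝ) (g : ℝ → ℝ) (x : ℝ) : ℝ :=
  (∫ z, Phim P V (g z) * gq σ (x - z)) / (∫ z, Pim P V (g z) * gq σ (x - z))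

/-- `φ_g`, equal to `φ⁺_g` on `[0,∞)` and `φ⁻_g` on `(−∞,0)`. -/
noncomputable def phig {Ω : Type*} [MeasurableSpace Ω] (P : Measure Ω) (V : Ω → ℝ)
    (σ : ℝ) (g : ℝ → ℝ) (x : ℝ) : ℝ :=
  if 0 ≤ x then phip P V σ g x else phim P V σ g x

/-- The interior of the support of the law of `V` is `(m, M)` (with `V` bounded). -/
def SuppIoo {Ω : Type*} [MeasurableSpace Ω] (P : Measure Ω) (V : Ω → ℝ) (m M : ℝ) : Prop :=
  m < M ∧ (∀ᵐ ω ∂P, V ω ∈ Set.Icc m M) ∧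
    (∀ y < M, 0 < P {ω | V ω > y}) ∧ (∀ y, m < y → 0 < P {ω | V ω ≤ y})

/-- Equation (E). -/
def SolvesE {Ω : Type*} [MeasurableSpace Ω] (P : Measure Ω) (V : Ω → ℝ)
    (σ : ℝ) (N : ℕ) (F : ℝ → ℝ) : Prop :=
  ∀ x : ℝ, F x =
    ∫ z, ((1 / (N:ℝ)) * gq σ (x - z) + (((N:ℝ) - 1) / (N:ℝ)) * gqbar σ x z) * phig P V σ F z

/-!
The kernel in (E) is the average of `q(σ, t x − z)` over a random dilation factor `t`, equal to `1`
with probability `1/N` and uniform on `(0, 1]` otherwise, so solutions of (E) are the fixed points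
of `F ↦ T φ_F`, where `T` smooths by a Gaussian and averages over the dilations. Total positivity
of the Gaussian kernel makes `φ_g` monotone on each half-line when `g` is. At the origin
`φ⁻_g ≤ E[V] < φ⁺_g`, and the jump is at least some `δ > 0` uniformly over the candidates `g`,
because these lie between two fixed functions with values in `(m, M)`. Hence `T φ_g` grows at least
as fast as `δ` times the smoothed unit step, and one may restrict to strictly increasing
candidates: such a `g` takes each of the countably many values at which `Φ^±` and `Π^±` jump at
most once, so the operator is continuous for pointwise convergence although the law of `V` may
have atoms. It maps a compact convex set of Lipschitz functions to itself, and Tychonoff's theorem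
gives a fixed point. Tychonoff's theorem is reduced to Brouwer's by a partition of unity, and
Brouwer's is derived from Scarf's combinatorial lemma.
-/

section Scarf

open scoped Finset

variable {X I L : Type*} [LinearOrder L] {r : I → X → L}

lemma exists_pair_image_erase_eq {A B : Type*} [DecidableEq A] [DecidableEq B] {f : A → B}
    {s : Finset A} {t : Finset B} (hf : s.image f = t) (hc : s.card = t.card + 1) :
    ∃ a ∈ s, ∃ b ∈ s, a ≠ b ∧ ∀ k ∈ s, (s.erase k).image f = t ↔ k = a ∨ k = b := by
  have hmaps : ∀ a ∈ s, f a ∈ t := fun a ha => hf ▸ Finset.mem_image_of_mem f ha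
  obtain ⟨a, ha, b, hb, hab, hfab⟩ :=
    Finset.exists_ne_map_eq_of_card_lt_of_maps_to (by omega : t.card < s.card) hmaps
  have image_erase : ∀ x ∈ s, ∀ y ∈ s, x ≠ y → f x = f y → (s.erase x).image f = t := by
    intro x hx y hy hxy hfxy
    rw [← hf, ← Finset.insert_erase hx, Finset.image_insert, Finset.erase_insert_eq_erase,
      Finset.erase_idem, hfxy, Finset.insert_eq_of_mem]
    exact Finset.mem_image_of_mem f (Finset.mem_erase.2 ⟨hxy.symm, hy⟩)
  refine ⟨a, ha, b, hb, hab, fun k hk => ⟨fun h => ?_, ?_⟩⟩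
  · by_contra! hne
    have hinj : Set.InjOn f (s.erase k) := by
      apply Finset.injOn_of_card_image_eq
      rw [h, Finset.card_erase_of_mem hk, hc, Nat.add_sub_cancel]
    exact hab (hinj (by simp [ha, hne.1.symm]) (by simp [hb, hne.2.symm]) hfab)
  · rintro (rfl | rfl)
    · exact image_erase k ha b hb hab hfab
    · exact image_erase k hb a ha hab.symm hfab.symm

/-- Scarf's dominance: no point lies strictly above the `r i`-minimum of `S` for every `i`. -/
def IsDominant (r : I → X → L) (S : Finset X) : Prop :=
  ∀ x, ∃ i, ∀ s ∈ S, r i x ≤ r i s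

lemma IsDominant.anti {S T : Finset X} (h : IsDominant r S) (hT : T ⊆ S) : IsDominant r T :=
  fun x => (h x).imp fun _ hi s hs => hi s (hT hs)

lemma IsDominant.image_argmin [Fintype I] [DecidableEq X] {T : Finset X} (h : IsDominant r T)
    (hr : ∀ i, Function.Injective (r i)) {μ : I → X}
    (hμ : ∀ i, μ i ∈ T ∧ ∀ t ∈ T, r i (μ i) ≤ r i t) : Finset.univ.image μ = T := by
  refine Finset.Subset.antisymm (Finset.image_subset_iff.2 fun i _ => (hμ i).1) fun x hx => ?_
  obtain ⟨i, hi⟩ := h x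
  exact Finset.mem_image.2
    ⟨i, Finset.mem_univ i, hr i (le_antisymm ((hμ i).2 x hx) (hi _ (hμ i).1))⟩

lemma exists_argmin (r : I → X → L) {T : Finset X} (hT : T.Nonempty) :
    ∃ μ : I → X, ∀ i, μ i ∈ T ∧ ∀ t ∈ T, r i (μ i) ≤ r i t :=
  ⟨fun i => (T.exists_min_image (r i) hT).choose,
    fun i => (T.exists_min_image (r i) hT).choose_spec⟩

/-- The points lying strictly above the `r k`-minimum of `T` for every `k ≠ e`. -/
def aboveExcept (r : I → X → L) (T : Finset X) (e : I) : Set X :=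
  {y | ∀ k ≠ e, ∃ t ∈ T, r k t < r k y}

lemma IsDominant.disjoint_aboveExcept {T : Finset X} (h : IsDominant r T) {i j : I}
    (hij : i ≠ j) : Disjoint (aboveExcept r T i) (aboveExcept r T j) := by
  refine Set.disjoint_left.2 fun y hi hj => ?_
  obtain ⟨k, hk⟩ := h y
  have below : ¬ ∃ t ∈ T, r k t < r k y := fun ⟨t, ht, hlt⟩ => (hk t ht).not_gt hlt
  rcases eq_or_ne k i with rfl | hki
  · exact below (hj k hij)
  · exact below (hi k hki)

lemma IsDominant.le_of_mem_aboveExcept {T : Finset X} (h : IsDominant r T) {e : I} {y : X}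
    (hy : y ∈ aboveExcept r T e) {t : X} (ht : t ∈ T) : r e y ≤ r e t := by
  obtain ⟨k, hk⟩ := h y
  obtain rfl : k = e := by
    by_contra hke
    obtain ⟨s, hs, hlt⟩ := hy k hke
    exact (hk s hs).not_gt hlt
  exact hk t ht

lemma IsDominant.insert_of_isMaxOn [DecidableEq X] {T : Finset X} (h : IsDominant r T) {e : I}
    {x : X} (hx : x ∈ aboveExcept r T e) (hmax : IsMaxOn (r e) (aboveExcept r T e) x) :
    IsDominant r (insert x T) := by
  intro y
  by_cases hy : y ∈ aboveExcept r T e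
  · exact ⟨e, Finset.forall_mem_insert _ _ _ |>.2
      ⟨hmax hy, fun t ht => h.le_of_mem_aboveExcept hy ht⟩⟩
  · obtain ⟨k, hke, hk⟩ : ∃ k ≠ e, ∀ t ∈ T, r k y ≤ r k t := by
      simpa [aboveExcept] using hy
    obtain ⟨t, ht, hlt⟩ := hx k hke
    exact ⟨k, Finset.forall_mem_insert _ _ _ |>.2 ⟨(hk t ht).trans hlt.le, hk⟩⟩

lemma IsDominant.exists_isMaxOn_of_insert [Fintype I] [DecidableEq I] [DecidableEq X]
    (hr : ∀ i, Function.Injective (r i)) {T : Finset X} (hcard : T.card + 1 = Fintype.card I)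
    {μ : I → X} (hμ : ∀ i, μ i ∈ T ∧ ∀ t ∈ T, r i (μ i) ≤ r i t) {x : X} (hxT : x ∉ T)
    (h : IsDominant r (insert x T)) :
    ∃ e, (Finset.univ.erase e).image μ = T ∧ x ∈ aboveExcept r T e ∧
      IsMaxOn (r e) (aboveExcept r T e) x := by
  obtain ⟨ν, hν⟩ := exists_argmin r (Finset.insert_nonempty x T)
  have himage := h.image_argmin hr hν
  have hinj : Function.Injective ν := by
    rw [← Set.injOn_univ, ← Finset.coe_univ]
    apply Finset.injOn_of_card_image_eq
    rw [himage, Finset.card_insert_of_notMem hxT, hcard, Finset.card_univ]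
  obtain ⟨e, -, rfl⟩ := Finset.mem_image.1 (himage ▸ Finset.mem_insert_self x T)
  have hνT : ∀ k ≠ e, ν k ∈ T := fun k hk =>
    Finset.mem_of_mem_insert_of_ne (hν k).1 (hinj.ne hk)
  have hμν : ∀ k ≠ e, μ k = ν k := fun k hk =>
    hr k (le_antisymm ((hμ k).2 _ (hνT k hk)) ((hν k).2 _ (Finset.mem_insert_of_mem (hμ k).1)))
  refine ⟨e, ?_, fun k hk => ⟨ν k, hνT k hk, ?_⟩, fun y hy => ?_⟩
  · rw [Finset.image_congr fun k hk => hμν k (Finset.ne_of_mem_erase hk), Finset.image_erase hinj,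
      himage, Finset.erase_insert hxT]
  · exact ((hν k).2 _ (Finset.mem_insert_self _ _)).lt_of_ne ((hr k).ne (hinj.ne hk))
  · obtain ⟨k, hk⟩ := h y
    obtain rfl : k = e := by
      by_contra hke
      obtain ⟨t, ht, hlt⟩ := hy k hke
      exact (hk t (Finset.mem_insert_of_mem ht)).not_gt hlt
    exact hk _ (Finset.mem_insert_self _ _)

lemma IsDominant.exists_pair_insert_iff [Fintype I] [Finite X] [DecidableEq X]
    (hr : ∀ i, Function.Injective (r i)) {T : Finset X} (hT : T.Nonempty)
    (hcard : T.card + 1 = Fintype.card I) (h : IsDominant r T)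
    (hne : ∀ e, (aboveExcept r T e).Nonempty) :
    ∃ a b, a ≠ b ∧ ∀ x, x ∉ T ∧ IsDominant r (insert x T) ↔ x = a ∨ x = b := by
  classical
  obtain ⟨μ, hμ⟩ := exists_argmin r hT
  obtain ⟨i, -, j, -, hij, hpair⟩ := exists_pair_image_erase_eq (h.image_argmin hr hμ)
    (by rw [Finset.card_univ, hcard])
  have exists_max : ∀ e, ∃ x ∈ aboveExcept r T e, IsMaxOn (r e) (aboveExcept r T e) x :=
    fun e => Set.exists_max_image _ (r e) (Set.toFinite _) (hne e)
  choose p hp hpmax using exists_max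
  have notMem : ∀ e, (Finset.univ.erase e).image μ = T → p e ∉ T := by
    intro e he hpT
    obtain ⟨k, hk, hpk⟩ := Finset.mem_image.1 (he ▸ hpT)
    obtain ⟨t, ht, hlt⟩ := hp e k (Finset.ne_of_mem_erase hk)
    exact ((hμ k).2 t ht).not_gt (hpk ▸ hlt)
  have iff_eq : ∀ x, x ∉ T ∧ IsDominant r (insert x T) ↔
      ∃ e, (Finset.univ.erase e).image μ = T ∧ x = p e := by
    refine fun x => ⟨fun ⟨hxT, hx⟩ => ?_, ?_⟩
    · obtain ⟨e, he, hxe, hmax⟩ := hx.exists_isMaxOn_of_insert hr hcard hμ hxT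
      exact ⟨e, he, hr e (le_antisymm (hpmax e hxe) (hmax (hp e)))⟩
    · rintro ⟨e, he, rfl⟩
      exact ⟨notMem e he, h.insert_of_isMaxOn (hp e) (hpmax e)⟩
  refine ⟨p i, p j, fun hpij => ?_, fun x => ?_⟩
  · exact Set.disjoint_left.1 (h.disjoint_aboveExcept hij) (hp i) (hpij ▸ hp j)
  · simp only [iff_eq, hpair _ (Finset.mem_univ _), or_and_right, exists_or, exists_eq_left]

open scoped Classical in
lemma card_room_eq_card_insert [Fintype I] [Fintype X] {T : Finset X}
    (hcard : T.card + 1 = Fintype.card I) :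
    #{S : Finset X | (S.card = Fintype.card I ∧ IsDominant r S) ∧ T ⋖ S} =
      #{x | x ∉ T ∧ IsDominant r (insert x T)} := by
  rw [← Finset.card_image_of_injOn (f := fun x => insert x T) ((Finset.insert_inj_on' T).mono ?_)]
  · congr 1
    ext S
    simp only [Finset.mem_filter, Finset.mem_univ, true_and, Finset.covBy_iff_exists_insert,
      Finset.mem_image]
    constructor
    · rintro ⟨⟨-, hS⟩, x, hx, rfl⟩
      exact ⟨x, ⟨hx, hS⟩, rfl⟩
    · rintro ⟨x, ⟨hx, hS⟩, rfl⟩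
      exact ⟨⟨(Finset.card_insert_of_notMem hx).trans hcard, hS⟩, x, hx, rfl⟩
  · intro x hx
    simpa using (Finset.mem_filter.1 hx).2.1

/-- Scarf's slack points: `u i` is lowest for `r i`, and above all ordinary points for the other
orders. They play the role of the facets of the simplex. -/
structure IsSlack (r : I → X → L) (u : I → X) : Prop where
  le : ∀ i x, r i (u i) ≤ r i x
  lt : ∀ i j, j ≠ i → ∀ x ∉ range u, r i x < r i (u j)

variable [Fintype I] [DecidableEq I] {u : I → X} {c : X → I}

lemma card_image_erase_add_one [DecidableEq X] (hc : ∀ i, c (u i) = i) (i₀ : I) :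
    ((Finset.univ.erase i₀).image u).card + 1 = Fintype.card I := by
  rw [Finset.card_image_of_injective _ (Function.LeftInverse.injective hc),
    Finset.card_erase_add_one (Finset.mem_univ _), Finset.card_univ]

lemma image_image_erase [DecidableEq X] (hc : ∀ i, c (u i) = i) (i₀ : I) :
    ((Finset.univ.erase i₀).image u).image c = Finset.univ.erase i₀ := by
  rw [Finset.image_image, show c ∘ u = id from funext hc, Finset.image_id]

lemma IsSlack.mem_aboveExcept [DecidableEq X] (hu : IsSlack r u)
    (hr : ∀ i, Function.Injective (r i)) (hc : ∀ i, c (u i) = i) {i₀ : I} {T : Finset X}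
    (hcard : T.card + 1 = Fintype.card I) (hcol : T.image c = Finset.univ.erase i₀)
    (hbase : T ≠ (Finset.univ.erase i₀).image u) (e : I) : u e ∈ aboveExcept r T e := by
  intro k hk
  by_contra! hle
  have huinj : Function.Injective u := Function.LeftInverse.injective hc
  have hsub : T ⊆ (Finset.univ.erase k).image u := by
    intro t ht
    obtain ⟨j, rfl⟩ : t ∈ range u := by
      by_contra htu
      exact (hle t ht).not_gt (hu.lt k e hk.symm t htu)
    refine Finset.mem_image_of_mem u (Finset.mem_erase.2 ⟨?_, Finset.mem_univ j⟩)
    rintro rfl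
    exact hk (huinj (hr j (le_antisymm (hu.le j _) (hle _ ht))))
  have heq : T = (Finset.univ.erase k).image u := by
    have := card_image_erase_add_one hc k
    exact Finset.eq_of_subset_of_card_le hsub (by omega)
  obtain rfl : k = i₀ := by
    rw [heq, image_image_erase hc] at hcol
    simpa using congrArg (k ∈ ·) hcol
  exact hbase heq

lemma IsSlack.existsUnique_insert [Finite X] [DecidableEq X] (hu : IsSlack r u)
    (hr : ∀ i, Function.Injective (r i)) (huinj : Function.Injective u) (hX : ∃ x, x ∉ range u)
    (i₀ : I) :
    ∃! x, x ∉ (Finset.univ.erase i₀).image u ∧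
      IsDominant r (insert x ((Finset.univ.erase i₀).image u)) := by
  have lt_ordinary : ∀ i, ∀ x ∉ range u, r i (u i) < r i x := fun i x hx =>
    (hu.le i x).lt_of_ne fun h => hx ⟨i, hr i h⟩
  obtain ⟨p, hp, hpmax⟩ := Set.exists_max_image (range u)ᶜ (r i₀) (Set.toFinite _) hX
  refine ⟨p, ⟨fun h => ?_, fun y => ?_⟩, fun x ⟨hxT, hx⟩ => ?_⟩
  · obtain ⟨i, -, rfl⟩ := Finset.mem_image.1 h
    exact hp ⟨i, rfl⟩
  · by_cases hy : y ∈ range u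
    · obtain ⟨i, rfl⟩ := hy
      exact ⟨i, fun s _ => hu.le i s⟩
    · refine ⟨i₀, (Finset.forall_mem_insert _ _ _).2 ⟨hpmax y hy, fun s hs => ?_⟩⟩
      obtain ⟨i, hi, rfl⟩ := Finset.mem_image.1 hs
      exact (hu.lt i₀ i (Finset.ne_of_mem_erase hi) y hy).le
  · have le_i₀ : ∀ y ∉ range u, r i₀ y ≤ r i₀ x := by
      intro y hy
      obtain ⟨i, hi⟩ := hx y
      obtain rfl : i = i₀ := by
        by_contra hne
        exact (hi (u i) (Finset.mem_insert_of_mem (Finset.mem_image_of_mem u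
          (Finset.mem_erase.2 ⟨hne, Finset.mem_univ i⟩)))).not_gt (lt_ordinary i y hy)
      exact hi x (Finset.mem_insert_self _ _)
    have hxu : x ∉ range u := by
      rintro ⟨i, rfl⟩
      obtain rfl : i = i₀ := by simpa [huinj.eq_iff] using hxT
      exact (le_i₀ p hp).not_gt (lt_ordinary i p hp)
    exact hr i₀ (le_antisymm (hpmax x hxu) (le_i₀ p hp))

lemma even_card_erase_image_eq [DecidableEq X] {S : Finset X} (hcard : S.card = Fintype.card I)
    (i₀ : I) (hS : S.image c ≠ Finset.univ) :
    Even (S.filter fun s => (S.erase s).image c = Finset.univ.erase i₀).card := by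
  rcases Finset.eq_empty_or_nonempty
    (S.filter fun s => (S.erase s).image c = Finset.univ.erase i₀) with h | ⟨s, hs⟩
  · rw [h, Finset.card_empty]
    exact Even.zero
  obtain ⟨hsS, hs⟩ := Finset.mem_filter.1 hs
  have himage : S.image c = insert (c s) (Finset.univ.erase i₀) := by
    rw [← hs, ← Finset.image_insert, Finset.insert_erase hsS]
  have hcs : c s ≠ i₀ := by
    rintro rfl
    exact hS (himage.trans (Finset.insert_erase (Finset.mem_univ _)))
  rw [Finset.insert_eq_of_mem (Finset.mem_erase.2 ⟨hcs, Finset.mem_univ _⟩)] at himage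
  obtain ⟨a, ha, b, hb, hab, hpair⟩ := exists_pair_image_erase_eq himage (by
    rw [hcard, Finset.card_erase_add_one (Finset.mem_univ _), Finset.card_univ])
  rw [Finset.filter_congr hpair, Finset.card_eq_two.2 ⟨a, b, hab, ?_⟩]
  · exact even_two
  · ext k
    simp only [Finset.mem_filter, Finset.mem_insert, Finset.mem_singleton, and_iff_right_iff_imp]
    rintro (rfl | rfl) <;> assumption

open scoped Classical in
lemma even_card_door_of_image_ne_univ [Fintype X] {S : Finset X}
    (hcard : S.card = Fintype.card I) (i₀ : I) (hS : S.image c ≠ Finset.univ) :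
    Even #{T : Finset X | T.image c = Finset.univ.erase i₀ ∧ T ⋖ S} := by
  convert even_card_erase_image_eq hcard i₀ hS using 1
  rw [← Finset.card_image_of_injOn (f := S.erase)
    ((Finset.erase_injOn S).mono (Finset.filter_subset _ S))]
  congr 1
  ext T
  simp only [Finset.mem_filter, Finset.mem_univ, true_and, Finset.covBy_iff_exists_erase,
    Finset.mem_image]
  constructor
  · rintro ⟨hT, s, hs, rfl⟩
    exact ⟨s, ⟨hs, hT⟩, rfl⟩
  · rintro ⟨s, ⟨hs, hT⟩, rfl⟩
    exact ⟨hT, s, hs, rfl⟩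

open scoped Classical in
lemma IsSlack.odd_card_room_iff [Fintype X] (hu : IsSlack r u)
    (hr : ∀ i, Function.Injective (r i)) (hc : ∀ i, c (u i) = i) (hX : ∃ x, x ∉ range u) {i₀ : I}
    {T : Finset X} (hcard : T.card + 1 = Fintype.card I)
    (hcol : T.image c = Finset.univ.erase i₀) :
    Odd #{S : Finset X | (S.card = Fintype.card I ∧ IsDominant r S) ∧ T ⋖ S} ↔
      T = (Finset.univ.erase i₀).image u := by
  rw [card_room_eq_card_insert hcard]
  refine ⟨fun hodd => ?_, ?_⟩
  · by_contra hbase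
    obtain ⟨x, hx⟩ := Finset.card_pos.1 hodd.pos
    have hT : IsDominant r T := (Finset.mem_filter.1 hx).2.2.anti (Finset.subset_insert x T)
    have hmem := hu.mem_aboveExcept hr hc hcard hcol hbase
    have hne : T.Nonempty := by
      rw [Finset.nonempty_iff_ne_empty]
      rintro rfl
      refine hbase ?_
      rw [Finset.image_empty] at hcol
      rw [← hcol, Finset.image_empty]
    obtain ⟨a, b, hab, hiff⟩ := hT.exists_pair_insert_iff hr hne hcard fun e => ⟨u e, hmem e⟩
    rw [Finset.card_eq_two.2 ⟨a, b, hab, by ext; simp [hiff]⟩] at hodd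
    exact Nat.not_odd_iff_even.2 even_two hodd
  · rintro rfl
    obtain ⟨p, hp, hunique⟩ :=
      hu.existsUnique_insert hr (Function.LeftInverse.injective hc) hX i₀
    rw [Finset.card_eq_one.2 ⟨p, Finset.ext fun x => ?_⟩]
    · exact odd_one
    · rw [Finset.mem_filter, Finset.mem_singleton]
      exact ⟨fun h => hunique x h.2, fun h => ⟨Finset.mem_univ x, h ▸ hp⟩⟩

/-- Scarf's lemma, by counting the incidences of rooms (the dominant sets of full size) and doors
(the sets carrying every colour but `i₀`) modulo 2. -/
theorem IsSlack.exists_isDominant_image_eq_univ [Finite X] [Nonempty I] (hu : IsSlack r u)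
    (hr : ∀ i, Function.Injective (r i)) (hc : ∀ i, c (u i) = i) (hX : ∃ x, x ∉ range u) :
    ∃ S : Finset X, IsDominant r S ∧ S.image c = Finset.univ := by
  classical
  cases nonempty_fintype X
  by_contra! hS
  obtain ⟨i₀⟩ := ‹Nonempty I›
  set rooms : Finset (Finset X) := {S | S.card = Fintype.card I ∧ IsDominant r S}
  set doors : Finset (Finset X) :=
    {T | T.card + 1 = Fintype.card I ∧ T.image c = Finset.univ.erase i₀}
  have heven : Even (∑ S ∈ rooms, #(doors.bipartiteBelow (· ⋖ ·) S)) := by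
    refine Finset.even_sum _ fun S hSr => ?_
    obtain ⟨hcard, hdom⟩ := (Finset.mem_filter.1 hSr).2
    have hdoors : doors.bipartiteBelow (· ⋖ ·) S =
        ({T | T.image c = Finset.univ.erase i₀ ∧ T ⋖ S} : Finset (Finset X)) := by
      ext T
      simp only [doors, Finset.mem_bipartiteBelow, Finset.mem_filter, Finset.mem_univ, true_and,
        and_assoc, and_iff_right_iff_imp]
      rintro ⟨-, hTS⟩
      rw [← hcard, Nat.covBy_iff_add_one_eq.1 hTS.card_finset]
    rw [hdoors]
    exact even_card_door_of_image_ne_univ hcard i₀ (hS S hdom)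
  have hodd : doors.filter (fun T => Odd #(rooms.bipartiteAbove (· ⋖ ·) T)) =
      {(Finset.univ.erase i₀).image u} := by
    ext T
    simp only [rooms, doors, Finset.bipartiteAbove, Finset.filter_filter, Finset.mem_filter,
      Finset.mem_univ, true_and, Finset.mem_singleton]
    refine ⟨fun ⟨hT, hoddT⟩ => (hu.odd_card_room_iff hr hc hX hT.1 hT.2).1 hoddT, fun hT => ?_⟩
    have hdoor : T.card + 1 = Fintype.card I ∧ T.image c = Finset.univ.erase i₀ := by
      rw [hT]
      exact ⟨card_image_erase_add_one hc i₀, image_image_erase hc i₀⟩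
    exact ⟨hdoor, (hu.odd_card_room_iff hr hc hX hdoor.1 hdoor.2).2 hT⟩
  rw [← Finset.sum_card_bipartiteAbove_eq_sum_card_bipartiteBelow, ← Nat.not_odd_iff_even,
    Finset.odd_sum_iff_odd_card_odd, hodd] at heven
  exact heven odd_one

end Scarf

section Grid

variable {ι : Type*} [Fintype ι] [DecidableEq ι]

/-- The points of the simplex with coordinates in `ℕ / k`, scaled by `k`, together with one slack
point for each coordinate. -/
abbrev GridPoint (ι : Type*) [Fintype ι] [DecidableEq ι] (k : ℕ) : Type _ :=
  (Finset.univ : Finset ι).piAntidiag k ⊕ ι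

/-- The coordinates of a grid point, extended to the slack points as `IsSlack` requires. -/
def gridCoord {k : ℕ} (i : ι) : GridPoint ι k → ℤ
  | .inl a => a.1 i
  | .inr j => if j = i then -1 else k + 1

lemma gridCoord_inl {k : ℕ} (i : ι) (a : (Finset.univ : Finset ι).piAntidiag k) :
    gridCoord i (.inl a) = a.1 i :=
  rfl

lemma gridCoord_inr_self {k : ℕ} (i : ι) : gridCoord i (.inr i : GridPoint ι k) = -1 :=
  if_pos rfl

lemma gridCoord_inr_of_ne {k : ℕ} {i j : ι} (h : j ≠ i) :
    gridCoord i (.inr j : GridPoint ι k) = k + 1 :=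
  if_neg h

lemma neg_one_le_gridCoord {k : ℕ} (i : ι) (x : GridPoint ι k) : -1 ≤ gridCoord i x := by
  rcases x with a | j
  · rw [gridCoord_inl]
    omega
  · rcases eq_or_ne j i with rfl | hj
    · rw [gridCoord_inr_self]
    · rw [gridCoord_inr_of_ne hj]
      omega

/-- The `i`-th coordinate made injective: ties are broken by an enumeration of the points. -/
noncomputable def gridRank {k : ℕ} (i : ι) (x : GridPoint ι k) :
    ℤ ×ₗ Fin (Fintype.card (GridPoint ι k)) :=
  toLex (gridCoord i x, Fintype.equivFin _ x)

lemma gridRank_injective {k : ℕ} (i : ι) : Function.Injective (gridRank (k := k) i) :=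
  fun _ _ h => (Fintype.equivFin _).injective (Prod.ext_iff.1 (toLex.injective h)).2

lemma gridCoord_le_of_gridRank_le {k : ℕ} {i : ι} {x y : GridPoint ι k}
    (h : gridRank i x ≤ gridRank i y) : gridCoord i x ≤ gridCoord i y := by
  rcases Prod.Lex.toLex_le_toLex.1 h with h | h
  · exact h.le
  · exact h.1.le

lemma gridRank_lt_of_gridCoord_lt {k : ℕ} {i : ι} {x y : GridPoint ι k}
    (h : gridCoord i x < gridCoord i y) : gridRank i x < gridRank i y :=
  Prod.Lex.toLex_lt_toLex.2 (Or.inl h)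

lemma isSlack_inr (k : ℕ) : IsSlack gridRank (Sum.inr : ι → GridPoint ι k) where
  le i x := by
    rcases eq_or_ne x (.inr i) with rfl | hx
    · exact le_rfl
    refine (gridRank_lt_of_gridCoord_lt ?_).le
    rcases x with a | j
    · rw [gridCoord_inr_self, gridCoord_inl]
      omega
    · rw [gridCoord_inr_self, gridCoord_inr_of_ne (by rintro rfl; exact hx rfl)]
      omega
  lt i j hj x hx := by
    rcases x with a | l
    · refine gridRank_lt_of_gridCoord_lt ?_
      have := (Finset.single_le_sum (f := a.1) (fun _ _ => Nat.zero_le _)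
        (Finset.mem_univ i)).trans_eq (Finset.mem_piAntidiag.1 a.2).1
      rw [gridCoord_inl, gridCoord_inr_of_ne hj]
      omega
    · exact absurd ⟨l, rfl⟩ hx

lemma exists_le_mem_piAntidiag [Nonempty ι] {k : ℕ} {b : ι → ℕ} (hb : ∑ i, b i ≤ k) :
    ∃ a ∈ (Finset.univ : Finset ι).piAntidiag k, b ≤ a := by
  obtain ⟨i₀⟩ := ‹Nonempty ι›
  refine ⟨b + Pi.single i₀ (k - ∑ i, b i), Finset.mem_piAntidiag.2 ⟨?_, by simp⟩, le_self_add⟩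
  simp only [Pi.add_apply, Finset.sum_add_distrib, Finset.sum_pi_single', Finset.mem_univ, if_true]
  omega

lemma lt_sum_of_isDominant [Nonempty ι] {k : ℕ} {S : Finset (GridPoint ι k)}
    (hS : IsDominant gridRank S) {l : ι → ℤ} (hl : ∀ i, ∃ s ∈ S, gridCoord i s = l i) :
    (k : ℤ) < ∑ i, (l i + 1) := by
  have hl0 : ∀ i, 0 ≤ l i + 1 := by
    intro i
    obtain ⟨s, -, hs⟩ := hl i
    have := neg_one_le_gridCoord i s
    omega
  by_contra! hle
  obtain ⟨a, ha, hba⟩ := exists_le_mem_piAntidiag (b := fun i => (l i + 1).toNat) (k := k) (by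
    zify
    simpa only [Int.toNat_of_nonneg (hl0 _)] using hle)
  obtain ⟨i, hi⟩ := hS (.inl ⟨a, ha⟩)
  obtain ⟨s, hs, hsl⟩ := hl i
  have hai := gridCoord_le_of_gridRank_le (hi s hs)
  have hbi : (l i + 1).toNat ≤ a i := hba i
  rw [gridCoord_inl, hsl] at hai
  dsimp only at hai
  omega

lemma coe_le_add_card_of_isDominant [Nonempty ι] {k : ℕ} {S : Finset (GridPoint ι k)}
    (hS : IsDominant gridRank S) {p : ι → GridPoint ι k}
    (hp : ∀ i, p i ∈ S ∧ ∀ s ∈ S, gridCoord i (p i) ≤ gridCoord i s)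
    {a : (Finset.univ : Finset ι).piAntidiag k} (ha : .inl a ∈ S) (i : ι) :
    (a.1 i : ℤ) ≤ gridCoord i (p i) + Fintype.card ι := by
  have hsum := lt_sum_of_isDominant hS fun i => ⟨p i, (hp i).1, rfl⟩
  rw [Finset.sum_add_distrib, Finset.sum_const, Finset.card_univ, nsmul_one] at hsum
  have ha_sum : ∑ j, (a.1 j : ℤ) = k := by exact_mod_cast (Finset.mem_piAntidiag.1 a.2).1
  have hle := Finset.single_le_sum (f := fun j => (a.1 j : ℤ) - gridCoord j (p j))
    (fun j _ => sub_nonneg.2 ((hp j).2 _ ha)) (Finset.mem_univ i)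
  rw [Finset.sum_sub_distrib, ha_sum] at hle
  omega

lemma exists_piAntidiag_near_colours [Nonempty ι] (k : ℕ) (c : (ι → ℕ) → ι) :
    ∃ a ∈ (Finset.univ : Finset ι).piAntidiag k, ∀ i, a i ≤ Fintype.card ι ∨
      ∃ b ∈ (Finset.univ : Finset ι).piAntidiag k, c b = i ∧
        ∀ j, a j ≤ b j + Fintype.card ι ∧ b j ≤ a j + Fintype.card ι := by
  obtain ⟨a₁, ha₁, -⟩ := exists_le_mem_piAntidiag (b := (0 : ι → ℕ)) (k := k) (by simp)
  obtain ⟨S, hS, hcol⟩ := (isSlack_inr (ι := ι) k).exists_isDominant_image_eq_univ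
    (c := Sum.elim (fun a => c a.1) id) gridRank_injective (fun _ => rfl)
    ⟨.inl ⟨a₁, ha₁⟩, by rintro ⟨_, ⟨⟩⟩⟩
  have exists_colour : ∀ i, ∃ s ∈ S, Sum.elim (fun a => c a.1) id s = i := fun i =>
    Finset.mem_image.1 (hcol.symm ▸ Finset.mem_univ i)
  have hSne : S.Nonempty := (exists_colour (Classical.arbitrary ι)).imp fun _ h => h.1
  choose p hp using fun i : ι => S.exists_min_image (gridCoord i) hSne
  obtain ⟨a, ha⟩ : ∃ a, .inl a ∈ S := by
    by_contra! hno
    obtain ⟨i, hi⟩ := hS (.inl ⟨a₁, ha₁⟩)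
    obtain ⟨s | j, hs, hsi⟩ := exists_colour i
    · exact absurd hs (hno s)
    · obtain rfl : j = i := hsi
      have := gridCoord_le_of_gridRank_le (hi _ hs)
      rw [gridCoord_inl, gridCoord_inr_self] at this
      omega
  refine ⟨a.1, a.2, fun i => ?_⟩
  have hap := coe_le_add_card_of_isDominant hS hp ha
  obtain ⟨b | j, hb, hbi⟩ := exists_colour i
  · refine Or.inr ⟨b.1, b.2, hbi, fun j => ?_⟩
    have hpa : gridCoord j (p j) ≤ a.1 j := (hp j).2 _ ha
    have hpb : gridCoord j (p j) ≤ b.1 j := (hp j).2 _ hb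
    have hbp := coe_le_add_card_of_isDominant hS hp hb j
    have haj := hap j
    omega
  · obtain rfl : j = i := hbi
    have hpj : gridCoord j (p j) ≤ -1 := gridCoord_inr_self j ▸ (hp j).2 _ hb
    have haj := hap j
    omega

lemma div_mem_stdSimplex {k : ℕ} (hk : k ≠ 0) {a : ι → ℕ}
    (ha : a ∈ (Finset.univ : Finset ι).piAntidiag k) :
    (fun i => (a i : ℝ) / k) ∈ stdSimplex ℝ ι := by
  refine ⟨fun i => by positivity, ?_⟩
  rw [← Finset.sum_div, ← Nat.cast_sum, (Finset.mem_piAntidiag.1 ha).1,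
    div_self (Nat.cast_ne_zero.2 hk)]

end Grid

section Brouwer

open scoped Topology

variable {ι : Type*} [Fintype ι] {f : (ι → ℝ) → ι → ℝ}

lemma exists_approx_fixedPoint_stdSimplex [Nonempty ι]
    (hf : MapsTo f (stdSimplex ℝ ι) (stdSimplex ℝ ι)) {ε : ℝ} (hε : 0 < ε) :
    ∃ x ∈ stdSimplex ℝ ι, ∀ i, ∃ y ∈ stdSimplex ℝ ι, dist y x ≤ ε ∧ y i ≤ f y i + ε := by
  classical
  obtain ⟨k, hk⟩ := exists_nat_gt (Fintype.card ι / ε)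
  have hk0 : (0 : ℝ) < k := lt_of_le_of_lt (by positivity) hk
  have hkε : Fintype.card ι / (k : ℝ) ≤ ε := by
    rw [div_lt_iff₀ hε] at hk
    rw [div_le_iff₀ hk0]
    linarith
  have hkne : k ≠ 0 := by exact_mod_cast hk0.ne'
  set pt : (ι → ℕ) → ι → ℝ := fun a i => a i / k
  have exists_le : ∀ a, ∃ i, a ∈ (Finset.univ : Finset ι).piAntidiag k →
      pt a i ≤ f (pt a) i := by
    intro a
    by_cases ha : a ∈ (Finset.univ : Finset ι).piAntidiag k
    · have hpt := div_mem_stdSimplex hkne ha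
      obtain ⟨i, -, hi⟩ := Finset.exists_le_of_sum_le Finset.univ_nonempty
        (hpt.2.trans (hf hpt).2.symm).le
      exact ⟨i, fun _ => hi⟩
    · exact ⟨Classical.arbitrary ι, fun h => absurd h ha⟩
  choose c hc using exists_le
  obtain ⟨a, ha, hnear⟩ := exists_piAntidiag_near_colours k c
  refine ⟨pt a, div_mem_stdSimplex hkne ha, fun i => ?_⟩
  rcases hnear i with hai | ⟨b, hb, rfl, hab⟩
  · refine ⟨pt a, div_mem_stdSimplex hkne ha, by simpa using hε.le, ?_⟩
    have h0 := (hf (div_mem_stdSimplex hkne ha)).1 i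
    have : pt a i ≤ Fintype.card ι / k := by
      simp only [pt]
      gcongr
    linarith
  · refine ⟨pt b, div_mem_stdSimplex hkne hb, ?_, by linarith [hc b hb]⟩
    refine (dist_pi_le_iff hε.le).2 fun j => le_trans ?_ hkε
    rw [Real.dist_eq, ← sub_div, abs_div, Nat.abs_cast]
    gcongr
    have h₁ : (a j : ℝ) ≤ b j + Fintype.card ι := by exact_mod_cast (hab j).1
    have h₂ : (b j : ℝ) ≤ a j + Fintype.card ι := by exact_mod_cast (hab j).2
    exact abs_sub_le_iff.2 ⟨by linarith, by linarith⟩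

/-- Brouwer's fixed point theorem on the standard simplex. -/
theorem exists_fixedPoint_stdSimplex [Nonempty ι] (hf : ContinuousOn f (stdSimplex ℝ ι))
    (hmaps : MapsTo f (stdSimplex ℝ ι) (stdSimplex ℝ ι)) : ∃ x ∈ stdSimplex ℝ ι, f x = x := by
  choose x hx y hy hdist hle using fun n : ℕ =>
    exists_approx_fixedPoint_stdSimplex hmaps (Nat.one_div_pos_of_nat (α := ℝ) (n := n))
  obtain ⟨x₀, hx₀, ψ, hψ, hlim⟩ := (isCompact_stdSimplex ℝ ι).tendsto_subseq hx
  have hε : Tendsto (fun n => 1 / ((ψ n : ℝ) + 1)) atTop (𝓝 0) :=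
    tendsto_one_div_add_atTop_nhds_zero_nat.comp hψ.tendsto_atTop
  have hx₀f : ∀ i, x₀ i ≤ f x₀ i := by
    intro i
    have hylim : Tendsto (fun n => y (ψ n) i) atTop (𝓝 x₀) :=
      tendsto_iff_of_dist (squeeze_zero (fun _ => dist_nonneg) (fun n => hdist (ψ n) i) hε) |>.2
        hlim
    have hflim : Tendsto (fun n => f (y (ψ n) i)) atTop (𝓝 (f x₀)) :=
      (hf x₀ hx₀).tendsto.comp
        (tendsto_nhdsWithin_iff.2 ⟨hylim, Eventually.of_forall fun n => hy (ψ n) i⟩)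
    have := le_of_tendsto_of_tendsto' (tendsto_pi_nhds.1 hylim i)
      ((tendsto_pi_nhds.1 hflim i).add hε) fun n => hle (ψ n) i
    rwa [add_zero] at this
  refine ⟨x₀, hx₀, funext fun i => ?_⟩
  have hsum : ∑ i, x₀ i = ∑ i, f x₀ i := hx₀.2.trans (hmaps hx₀).2.symm
  exact ((Finset.sum_eq_sum_iff_of_le fun i _ => hx₀f i).1 hsum i (Finset.mem_univ i)).symm

end Brouwer

section Tychonoff

open scoped Topology

variable {E : Type*} [AddCommGroup E] [Module ℝ E] [TopologicalSpace E] [IsTopologicalAddGroup E]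
  [ContinuousSMul ℝ E] {K : Set E}

lemma exists_schauder_weights (hK : IsCompact K) {U : Set E} (hU : Convex ℝ U)
    (hU₀ : U ∈ 𝓝 0) :
    ∃ t : Finset E, ↑t ⊆ K ∧ ∃ w : E → t → ℝ, ContinuousOn w K ∧
      ∀ z ∈ K, w z ∈ stdSimplex ℝ t ∧ ∀ y, w z y ≠ 0 → z - y ∈ U := by
  have continuous_gauge_sub : ∀ y, Continuous fun z => gauge U (z - y) := fun y =>
    (continuous_gauge hU hU₀).comp (continuous_id.sub continuous_const)
  obtain ⟨t, htK, hcover⟩ := hK.elim_nhds_subcover (fun y => {z | gauge U (z - y) < 1})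
    fun y _ => (isOpen_lt (continuous_gauge_sub y) continuous_const).mem_nhds (by simp)
  set bump : E → t → ℝ := fun z y => max 0 (1 - gauge U (z - y))
  have continuous_bump : ∀ y, Continuous fun z => bump z y := fun y =>
    continuous_const.max (continuous_const.sub (continuous_gauge_sub y))
  have bump_nonneg : ∀ z y, 0 ≤ bump z y := fun z y => le_max_left _ _
  have sum_bump_pos : ∀ z ∈ K, 0 < ∑ y, bump z y := by
    intro z hz
    obtain ⟨y, hy, hzy⟩ := mem_iUnion₂.1 (hcover hz)
    exact Finset.sum_pos' (fun y _ => bump_nonneg z y)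
      ⟨⟨y, hy⟩, Finset.mem_univ _, lt_max_of_lt_right (sub_pos.2 hzy)⟩
  refine ⟨t, htK, fun z y => bump z y / ∑ y', bump z y', ?_, fun z hz => ⟨⟨fun y => ?_, ?_⟩, ?_⟩⟩
  · exact continuousOn_pi.2 fun y => (continuous_bump y).continuousOn.div
      (continuous_finsetSum _ fun y _ => continuous_bump y).continuousOn
      fun z hz => (sum_bump_pos z hz).ne'
  · exact div_nonneg (bump_nonneg z y) (sum_bump_pos z hz).le
  · rw [← Finset.sum_div, div_self (sum_bump_pos z hz).ne']
  · intro y hy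
    have hbump : 0 < bump z y := (bump_nonneg z y).lt_of_ne' (div_ne_zero_iff.1 hy).1
    have hlt : gauge U (z - y) < 1 := by
      rcases lt_max_iff.1 hbump with h | h
      · exact absurd h (lt_irrefl 0)
      · linarith
    exact setOfPred_gauge_lt_one_subset_self hU (mem_of_mem_nhds hU₀) (absorbent_nhds_zero hU₀) hlt

variable {T : E → E}

lemma exists_approx_fixedPoint_of_convex (hK : Convex ℝ K) (hcompact : IsCompact K)
    (hne : K.Nonempty) (hT : ContinuousOn T K) (hmaps : MapsTo T K K) {U : Set E}
    (hU : Convex ℝ U) (hU₀ : U ∈ 𝓝 0) : ∃ x ∈ K, T x - x ∈ U := by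
  obtain ⟨t, htK, w, hw, hwU⟩ := exists_schauder_weights hcompact hU hU₀
  have : Nonempty t := by
    obtain ⟨z, hz⟩ := hne
    exact (Finset.exists_ne_zero_of_sum_ne_zero ((hwU z hz).1.2.trans_ne one_ne_zero)).nonempty
  set comb : (t → ℝ) → E := fun a => ∑ y, a y • (y : E)
  have comb_mem : ∀ a ∈ stdSimplex ℝ t, comb a ∈ K := fun a ha =>
    hK.sum_mem (fun y _ => ha.1 y) ha.2 fun y _ => htK y.2
  have continuous_comb : Continuous comb :=
    continuous_finsetSum _ fun y _ => (continuous_apply y).smul continuous_const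
  obtain ⟨a, ha, hfix⟩ := exists_fixedPoint_stdSimplex (f := fun a => w (T (comb a)))
    (hw.comp (hT.comp continuous_comb.continuousOn comb_mem) fun a ha => hmaps (comb_mem a ha))
    fun a ha => (hwU _ (hmaps (comb_mem a ha))).1
  obtain ⟨-, hweight⟩ := hwU _ (hmaps (comb_mem a ha))
  refine ⟨comb a, comb_mem a ha, ?_⟩
  have hsub : T (comb a) - comb a = ∑ y, a y • (T (comb a) - y) := by
    simp only [smul_sub, Finset.sum_sub_distrib, ← Finset.sum_smul, ha.2, one_smul, comb]
  rw [hsub, ← finsum_eq_sum_of_fintype]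
  refine hU.finsum_mem ha.1 (by rw [finsum_eq_sum_of_fintype, ha.2]) fun y hy => hweight y ?_
  rwa [show w (T (comb a)) = a from hfix]

/-- Tychonoff's fixed point theorem. -/
theorem exists_fixedPoint_of_convex_of_isCompact [T2Space E] [LocallyConvexSpace ℝ E]
    (hK : Convex ℝ K) (hcompact : IsCompact K) (hne : K.Nonempty) (hT : ContinuousOn T K)
    (hmaps : MapsTo T K K) : ∃ x ∈ K, T x = x := by
  by_contra! hfix
  have hclosed : IsClosed ((fun x => T x - x) '' K) :=
    (hcompact.image_of_continuousOn (hT.sub continuousOn_id)).isClosed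
  have h0 : ((fun x => T x - x) '' K)ᶜ ∈ 𝓝 0 := by
    refine hclosed.isOpen_compl.mem_nhds ?_
    rintro ⟨x, hx, hTx⟩
    exact hfix x hx (sub_eq_zero.1 hTx)
  obtain ⟨U, ⟨hU₀, hU⟩, hdisj⟩ := (LocallyConvexSpace.convex_basis_zero ℝ E).mem_iff.1 h0
  obtain ⟨x, hx, hxU⟩ := exists_approx_fixedPoint_of_convex hK hcompact hne hT hmaps hU hU₀
  exact hdisj hxU ⟨x, hx, rfl⟩

end Tychonoff

lemma firstCountableTopology_of_isCompact {X Y : Type*} [TopologicalSpace X]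
    [TopologicalSpace.SeparableSpace X] [TopologicalSpace Y] [T2Space Y] [FirstCountableTopology Y]
    {K : Set (X → Y)} (hK : IsCompact K) (hcont : ∀ g ∈ K, Continuous g) :
    FirstCountableTopology K := by
  obtain ⟨D, hDcount, hD⟩ := TopologicalSpace.exists_countable_dense X
  have : Countable D := hDcount.to_subtype
  have : CompactSpace K := isCompact_iff_compactSpace.1 hK
  let restrictDense : K → D → Y := fun g x => g.1 x
  have hrestrict : Continuous restrictDense :=
    continuous_pi fun x => (continuous_apply (x : X)).comp continuous_subtype_val
  have hinj : Function.Injective restrictDense := fun g h hgh =>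
    Subtype.ext ((hcont g g.2).ext_on hD (hcont h h.2) fun x hx => congrFun hgh ⟨x, hx⟩)
  exact (hrestrict.isClosedEmbedding hinj).isEmbedding.firstCountableTopology

section Smoothing

open ProbabilityTheory
open scoped NNReal

/-- Bounded Borel functions, the class on which the smoothing operators below act. -/
structure IsBddMeasurable (f : ℝ → ℝ) : Prop where
  measurable : Measurable f
  exists_abs_le : ∃ C, ∀ x, |f x| ≤ C

namespace IsBddMeasurable

variable {f g : ℝ → ℝ}

lemma comp (hf : IsBddMeasurable f) (hg : Measurable g) : IsBddMeasurable fun x => f (g x) :=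
  ⟨hf.measurable.comp hg, hf.exists_abs_le.imp fun _ hC x => hC (g x)⟩

lemma const (c : ℝ) : IsBddMeasurable fun _ => c :=
  ⟨measurable_const, |c|, fun _ => le_rfl⟩

lemma sub (hf : IsBddMeasurable f) (hg : IsBddMeasurable g) :
    IsBddMeasurable fun x => f x - g x := by
  obtain ⟨C, hC⟩ := hf.exists_abs_le
  obtain ⟨D, hD⟩ := hg.exists_abs_le
  exact ⟨hf.measurable.sub hg.measurable, C + D, fun x =>
    (abs_sub _ _).trans (add_le_add (hC x) (hD x))⟩

lemma const_mul (hf : IsBddMeasurable f) (c : ℝ) : IsBddMeasurable fun x => c * f x := by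
  obtain ⟨C, hC⟩ := hf.exists_abs_le
  exact ⟨hf.measurable.const_mul c, |c| * C, fun x => by rw [abs_mul]; gcongr; exact hC x⟩

lemma min (hf : IsBddMeasurable f) (hg : IsBddMeasurable g) :
    IsBddMeasurable fun x => min (f x) (g x) := by
  obtain ⟨C, hC⟩ := hf.exists_abs_le
  obtain ⟨D, hD⟩ := hg.exists_abs_le
  exact ⟨hf.measurable.min hg.measurable, max C D, fun x =>
    abs_min_le_max_abs_abs.trans (max_le_max (hC x) (hD x))⟩

lemma of_mem_Icc {a b : ℝ} (hf : Measurable f) (hab : ∀ x, f x ∈ Icc a b) : IsBddMeasurable f :=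
  ⟨hf, max |a| |b|, fun x => abs_le_max_abs_abs (hab x).1 (hab x).2⟩

lemma integrable {μ : Measure ℝ} [IsFiniteMeasure μ] (hf : IsBddMeasurable f) : Integrable f μ := by
  obtain ⟨C, hC⟩ := hf.exists_abs_le
  exact Integrable.of_bound hf.measurable.aestronglyMeasurable C (ae_of_all _ hC)

end IsBddMeasurable

/-- The law of a centered Gaussian variable of standard deviation `σ`. -/
noncomputable abbrev noise (σ : ℝ) : Measure ℝ :=
  gaussianReal 0 (σ ^ 2).toNNReal

/-- The convolution of `f` with the centered Gaussian density of standard deviation `σ`. -/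
noncomputable def gaussConv (σ : ℝ) (f : ℝ → ℝ) (x : ℝ) : ℝ :=
  ∫ z, f z * gq σ (x - z)

variable {σ : ℝ} {f g : ℝ → ℝ}

lemma toNNReal_sq_ne_zero (hσ : 0 < σ) : (σ ^ 2).toNNReal ≠ 0 :=
  (Real.toNNReal_pos.2 (by positivity)).ne'

lemma gq_sub_eq_gaussianPDFReal (hσ : 0 < σ) (x z : ℝ) :
    gq σ (x - z) = gaussianPDFReal x (σ ^ 2).toNNReal z := by
  rw [gq, gaussianPDFReal, Real.coe_toNNReal _ (sq_nonneg σ), ← neg_sub z x, neg_sq,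
    Real.sqrt_mul' _ (sq_nonneg σ), Real.sqrt_sq hσ.le, div_eq_inv_mul, mul_comm σ]

lemma gq_pos (hσ : 0 < σ) (z : ℝ) : 0 < gq σ z := by
  unfold gq
  positivity

lemma gq_le_gq_zero (hσ : 0 < σ) (z : ℝ) : gq σ z ≤ gq σ 0 := by
  unfold gq
  gcongr ?_ / _
  refine Real.exp_le_exp.2 ?_
  gcongr ?_ / _
  nlinarith [sq_nonneg z]

lemma continuous_gq (σ : ℝ) : Continuous (gq σ) := by
  unfold gq
  fun_prop

lemma integrable_gq_sub (hσ : 0 < σ) (x : ℝ) : Integrable fun z => gq σ (x - z) := by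
  simp_rw [gq_sub_eq_gaussianPDFReal hσ]
  exact integrable_gaussianPDFReal _ _

lemma gaussConv_eq_integral_noise (hσ : 0 < σ) (f : ℝ → ℝ) (x : ℝ) :
    gaussConv σ f x = ∫ w, f (x + w) ∂noise σ := by
  have hmap : (noise σ).map (MeasurableEquiv.addLeft x) = gaussianReal x (σ ^ 2).toNNReal := by
    rw [MeasurableEquiv.coe_addLeft, gaussianReal_map_const_add, zero_add]
  calc gaussConv σ f x = ∫ z, f z ∂gaussianReal x (σ ^ 2).toNNReal := by
        rw [integral_gaussianReal_eq_integral_smul (toNNReal_sq_ne_zero hσ), gaussConv]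
        simp only [gq_sub_eq_gaussianPDFReal hσ, smul_eq_mul, mul_comm]
    _ = ∫ w, f (x + w) ∂noise σ := by
        rw [← hmap, integral_map_equiv, MeasurableEquiv.coe_addLeft]

lemma noise_le_smul_volume (hσ : 0 < σ) :
    noise σ ≤ ENNReal.ofReal (gq σ 0) • volume := by
  rw [noise, gaussianReal_of_var_ne_zero _ (toNNReal_sq_ne_zero hσ), ← withDensity_const]
  refine withDensity_mono (ae_of_all _ fun z => ?_)
  rw [gaussianPDF, ← gq_sub_eq_gaussianPDFReal hσ]
  exact ENNReal.ofReal_le_ofReal (gq_le_gq_zero hσ _)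

lemma IsBddMeasurable.integrable_add_left_noise (hf : IsBddMeasurable f) (σ x : ℝ) :
    Integrable (fun w => f (x + w)) (noise σ) :=
  (hf.comp (measurable_const_add x)).integrable

lemma IsBddMeasurable.integrable_mul_gq (hf : IsBddMeasurable f) (hσ : 0 < σ) (x : ℝ) :
    Integrable fun z => f z * gq σ (x - z) := by
  obtain ⟨C, hC⟩ := hf.exists_abs_le
  exact (integrable_gq_sub hσ x).bdd_mul hf.measurable.aestronglyMeasurable (ae_of_all _ hC)

lemma gaussConv_const (hσ : 0 < σ) (c x : ℝ) : gaussConv σ (fun _ => c) x = c := by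
  simp [gaussConv_eq_integral_noise hσ]

lemma gaussConv_sub (hσ : 0 < σ) (hf : IsBddMeasurable f) (hg : IsBddMeasurable g) (x : ℝ) :
    gaussConv σ (fun z => f z - g z) x = gaussConv σ f x - gaussConv σ g x := by
  simp only [gaussConv_eq_integral_noise hσ]
  exact integral_sub (hf.integrable_add_left_noise σ x) (hg.integrable_add_left_noise σ x)

lemma gaussConv_const_mul (c : ℝ) (f : ℝ → ℝ) (x : ℝ) :
    gaussConv σ (fun z => c * f z) x = c * gaussConv σ f x := by
  simp only [gaussConv, mul_assoc, integral_const_mul]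

lemma gaussConv_mono (hσ : 0 < σ) (hf : IsBddMeasurable f) (hg : IsBddMeasurable g)
    (hfg : ∀ z, f z ≤ g z) (x : ℝ) : gaussConv σ f x ≤ gaussConv σ g x := by
  simp only [gaussConv_eq_integral_noise hσ]
  exact integral_mono (hf.integrable_add_left_noise σ x) (hg.integrable_add_left_noise σ x)
    fun w => hfg (x + w)

lemma gaussConv_mem_Icc (hσ : 0 < σ) (hf : Measurable f) {a b : ℝ} (hab : ∀ z, f z ∈ Icc a b)
    (x : ℝ) : gaussConv σ f x ∈ Icc a b := by
  have hfb := IsBddMeasurable.of_mem_Icc hf hab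
  constructor
  · simpa only [gaussConv_const hσ] using
      gaussConv_mono hσ (.const a) hfb (fun z => (hab z).1) x
  · simpa only [gaussConv_const hσ] using
      gaussConv_mono hσ hfb (.const b) (fun z => (hab z).2) x

lemma gaussConv_pos (hσ : 0 < σ) (hf : IsBddMeasurable f) (hpos : ∀ z, 0 < f z) (x : ℝ) :
    0 < gaussConv σ f x := by
  rw [gaussConv_eq_integral_noise hσ,
    integral_pos_iff_support_of_nonneg (fun w => (hpos _).le) (hf.integrable_add_left_noise σ x)]
  rw [show Function.support (fun w => f (x + w)) = univ from
    eq_univ_of_forall fun w => (hpos _).ne', measure_univ]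
  exact one_pos

lemma monotone_gaussConv (hσ : 0 < σ) (hf : IsBddMeasurable f) (hmono : Monotone f) :
    Monotone (gaussConv σ f) := by
  intro x y hxy
  simp only [gaussConv_eq_integral_noise hσ]
  exact integral_mono (hf.integrable_add_left_noise σ x) (hf.integrable_add_left_noise σ y)
    fun w => hmono (add_le_add_left hxy w)

/-- The unit step at the origin. -/
noncomputable def step : ℝ → ℝ :=
  (Ici 0).indicator 1

lemma gaussConv_step (hσ : 0 < σ) (x : ℝ) : gaussConv σ step x = (noise σ).real (Ici (-x)) := by
  rw [gaussConv_eq_integral_noise hσ, ← integral_indicator_one measurableSet_Ici]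
  congr with w
  simp [step, indicator, neg_le_iff_add_nonneg']

lemma strictMono_gaussConv_step (hσ : 0 < σ) : StrictMono (gaussConv σ step) := by
  intro x y hxy
  have hne : noise σ (Ico (-y) (-x)) ≠ 0 := by
    refine fun h => hxy.not_ge ?_
    have := gaussianReal_absolutelyContinuous' 0 (toNNReal_sq_ne_zero hσ) h
    simpa [Real.volume_Ico] using this
  rw [gaussConv_step hσ, gaussConv_step hσ, ← Ico_union_Ici_eq_Ici (neg_le_neg hxy.le),
    measureReal_union ((Iio_disjoint_Ici le_rfl).mono_left Ico_subset_Iio_self) measurableSet_Ici]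
  exact lt_add_of_pos_left _ (ENNReal.toReal_pos hne (measure_ne_top _ _))

lemma step_mem_Icc (x : ℝ) : step x ∈ Icc (0 : ℝ) 1 := by
  by_cases hx : 0 ≤ x <;> simp [step, hx]

lemma measurable_step : Measurable step :=
  measurable_one.indicator measurableSet_Ici

lemma intervalIntegral_comp_add_sub_le_of_monotone (hf : Monotone f) {m M : ℝ}
    (hmM : ∀ z, f z ∈ Icc m M) {a b R : ℝ} (hab : a ≤ b) :
    ∫ w in (-R)..R, (f (b + w) - f (a + w)) ≤ (M - m) * (b - a) := by
  have hint : ∀ c d, IntervalIntegrable f volume c d := fun c d => hf.intervalIntegrable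
  have hint_add : ∀ c, IntervalIntegrable (fun w => f (c + w)) volume (-R) R := fun c =>
    (hf.comp fun _ _ h => add_le_add_right h c).intervalIntegrable
  have upper : ∫ w in (a + R)..(b + R), f w ≤ M * (b - a) := by
    refine (intervalIntegral.integral_mono_on (by linarith) (hint _ _)
      intervalIntegrable_const fun z _ => (hmM z).2).trans_eq ?_
    rw [intervalIntegral.integral_const, smul_eq_mul]
    ring
  have lower : m * (b - a) ≤ ∫ w in (a - R)..(b - R), f w := by
    refine le_trans (le_of_eq ?_) (intervalIntegral.integral_mono_on (by linarith)
      intervalIntegrable_const (hint _ _) fun z _ => (hmM z).1)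
    rw [intervalIntegral.integral_const, smul_eq_mul]
    ring
  have shift : ∫ w in (-R)..R, (f (b + w) - f (a + w)) =
      (∫ w in (a + R)..(b + R), f w) - ∫ w in (a - R)..(b - R), f w := by
    rw [intervalIntegral.integral_sub (hint_add b) (hint_add a),
      intervalIntegral.integral_comp_add_left, intervalIntegral.integral_comp_add_left,
      ← sub_eq_add_neg, ← sub_eq_add_neg,
      intervalIntegral.integral_interval_sub_interval_comm' (hint _ _) (hint _ _) (hint _ _)]
  rw [shift, sub_mul]
  exact sub_le_sub upper lower

lemma integral_comp_add_sub_le_of_monotone (hf : Monotone f) {m M : ℝ}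
    (hmM : ∀ z, f z ∈ Icc m M) {a b : ℝ} (hab : a ≤ b) {μ : Measure ℝ} {c : ℝ≥0}
    (hμ : μ ≤ c • volume) :
    ∫ w, (f (b + w) - f (a + w)) ∂μ ≤ c * ((M - m) * (b - a)) := by
  have hnonneg : ∀ w, 0 ≤ f (b + w) - f (a + w) := fun w =>
    sub_nonneg.2 (hf (add_le_add_left hab w))
  have hint : ∀ R, IntervalIntegrable (fun w => f (b + w) - f (a + w)) volume (-R) R := fun R =>
    (hf.comp fun _ _ h => add_le_add_right h b).intervalIntegrable.sub
      (hf.comp fun _ _ h => add_le_add_right h a).intervalIntegrable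
  have hbound : ∀ R, ∫ w in (-R)..R, (f (b + w) - f (a + w)) ≤ (M - m) * (b - a) := fun R =>
    intervalIntegral_comp_add_sub_le_of_monotone hf hmM hab
  have hintegrable : Integrable (fun w => f (b + w) - f (a + w)) := by
    refine integrable_of_intervalIntegral_norm_bounded ((M - m) * (b - a))
      (fun R => (hint R).1) tendsto_neg_atTop_atBot tendsto_id (.of_forall fun R => ?_)
    simpa only [Real.norm_of_nonneg (hnonneg _)] using hbound R
  calc ∫ w, (f (b + w) - f (a + w)) ∂μ ≤ ∫ w, (f (b + w) - f (a + w)) ∂(c • volume) :=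
        integral_mono_measure hμ (ae_of_all _ hnonneg) (hintegrable.smul_measure_nnreal)
    _ = c * ∫ w, (f (b + w) - f (a + w)) := integral_smul_nnreal_measure _ _
    _ ≤ c * ((M - m) * (b - a)) := by
        gcongr
        exact le_of_tendsto (intervalIntegral_tendsto_integral hintegrable
          tendsto_neg_atTop_atBot tendsto_id) (.of_forall hbound)

lemma gaussConv_sub_le_of_monotone (hσ : 0 < σ) (hf : Monotone f) {m M : ℝ}
    (hmM : ∀ z, f z ∈ Icc m M) {a b : ℝ} (hab : a ≤ b) :
    gaussConv σ f b - gaussConv σ f a ≤ gq σ 0 * ((M - m) * (b - a)) := by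
  have hfb := IsBddMeasurable.of_mem_Icc hf.measurable hmM
  rw [gaussConv_eq_integral_noise hσ, gaussConv_eq_integral_noise hσ,
    ← integral_sub (hfb.integrable_add_left_noise σ b) (hfb.integrable_add_left_noise σ a),
    ← Real.coe_toNNReal _ (gq_pos hσ 0).le]
  exact integral_comp_add_sub_le_of_monotone hf hmM hab (noise_le_smul_volume hσ)

lemma gq_mul_gq_le (hσ : 0 < σ) {x y z w : ℝ} (hxy : x ≤ y) (hzw : z ≤ w) :
    gq σ (x - w) * gq σ (y - z) ≤ gq σ (y - w) * gq σ (x - z) := by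
  unfold gq
  rw [div_mul_div_comm, div_mul_div_comm, ← Real.exp_add, ← Real.exp_add, ← add_div, ← add_div]
  gcongr ?_ / _
  refine Real.exp_le_exp.2 ?_
  gcongr ?_ / _
  nlinarith [mul_nonneg (sub_nonneg.2 hxy) (sub_nonneg.2 hzw)]

-- The symmetrisation of the difference of the two sides over `α × α` is the integral of `hdet`.
lemma integral_mul_integral_le_of_det_mul_det_nonneg {α : Type*} [MeasurableSpace α]
    {μ : Measure α} [SFinite μ] {a b p q : α → ℝ}
    (hap : Integrable (fun z => a z * p z) μ) (haq : Integrable (fun z => a z * q z) μ)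
    (hbp : Integrable (fun z => b z * p z) μ) (hbq : Integrable (fun z => b z * q z) μ)
    (hdet : ∀ z w, 0 ≤ (a z * b w - a w * b z) * (q z * p w - q w * p z)) :
    (∫ z, a z * p z ∂μ) * (∫ z, b z * q z ∂μ) ≤ (∫ z, a z * q z ∂μ) * (∫ z, b z * p z ∂μ) := by
  let k : α × α → ℝ := fun v => a v.1 * q v.1 * (b v.2 * p v.2) - a v.1 * p v.1 * (b v.2 * q v.2)
  have hk : Integrable k (μ.prod μ) := (haq.mul_prod hbp).sub (hap.mul_prod hbq)
  have integral_k : ∫ v, k v ∂μ.prod μ =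
      (∫ z, a z * q z ∂μ) * (∫ z, b z * p z ∂μ) - (∫ z, a z * p z ∂μ) * (∫ z, b z * q z ∂μ) := by
    rw [← integral_prod_mul, ← integral_prod_mul,
      ← integral_sub (haq.mul_prod hbp) (hap.mul_prod hbq)]
  have hsymm : 0 ≤ ∫ v, (k v + k v.swap) ∂μ.prod μ := by
    refine integral_nonneg fun v => (hdet v.1 v.2).trans_eq ?_
    simp only [k, Prod.fst_swap, Prod.snd_swap]
    ring
  have integral_k_swap : ∫ v, k v.swap ∂μ.prod μ = ∫ v, k v ∂μ.prod μ := integral_prod_swap k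
  have integrable_k_swap : Integrable (fun v : α × α => k v.swap) (μ.prod μ) := hk.swap
  rw [integral_add hk integrable_k_swap, integral_k_swap, integral_k] at hsymm
  linarith

lemma gaussConv_mul_gaussConv_le (hσ : 0 < σ) (hf : IsBddMeasurable f) (hg : IsBddMeasurable g)
    (hfg : ∀ z w, z ≤ w → f z * g w ≤ f w * g z) {x y : ℝ} (hxy : x ≤ y) :
    gaussConv σ f x * gaussConv σ g y ≤ gaussConv σ f y * gaussConv σ g x := by
  refine integral_mul_integral_le_of_det_mul_det_nonneg (hf.integrable_mul_gq hσ x)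
    (hf.integrable_mul_gq hσ y) (hg.integrable_mul_gq hσ x) (hg.integrable_mul_gq hσ y)
    fun z w => ?_
  rcases le_total z w with hzw | hwz
  · refine mul_nonneg_of_nonpos_of_nonpos (sub_nonpos.2 (hfg z w hzw)) (sub_nonpos.2 ?_)
    rw [mul_comm]
    exact gq_mul_gq_le hσ hxy hzw
  · refine mul_nonneg (sub_nonneg.2 (hfg w z hwz)) (sub_nonneg.2 ?_)
    rw [mul_comm (gq σ (y - w))]
    exact gq_mul_gq_le hσ hxy hwz

lemma isBddMeasurable_gaussConv (hσ : 0 < σ) (hf : IsBddMeasurable f) :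
    IsBddMeasurable (gaussConv σ f) := by
  obtain ⟨C, hC⟩ := hf.exists_abs_le
  refine .of_mem_Icc (a := -C) (b := C) ?_
    (gaussConv_mem_Icc hσ hf.measurable fun z => abs_le.1 (hC z))
  simp_rw [funext (gaussConv_eq_integral_noise hσ f)]
  exact (hf.measurable.comp measurable_add).stronglyMeasurable.integral_prod_right'.measurable

section Param

variable {X : Type*} [TopologicalSpace X] [FirstCountableTopology X]

lemma continuousAt_gaussConv_param (hσ : 0 < σ) {F : X → ℝ → ℝ} {h₀ : X} {C : ℝ}
    (hmeas : ∀ h, Measurable (F h)) (hC : ∀ h z, |F h z| ≤ C)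
    (hcont : {z | ¬ContinuousAt (fun h => F h z) h₀}.Countable) (x : ℝ) :
    ContinuousAt (fun h => gaussConv σ (F h) x) h₀ := by
  refine continuousAt_of_dominated (bound := fun z => C * gq σ (x - z))
    (.of_forall fun h =>
      (IsBddMeasurable.mk (hmeas h) ⟨C, hC h⟩).integrable_mul_gq hσ x |>.aestronglyMeasurable)
    (.of_forall fun h => ae_of_all _ fun z => ?_) ((integrable_gq_sub hσ x).const_mul C) ?_
  · rw [Real.norm_eq_abs, abs_mul, abs_of_pos (gq_pos hσ _)]
    exact mul_le_mul_of_nonneg_right (hC h z) (gq_pos hσ _).le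
  · filter_upwards [hcont.ae_notMem volume] with z hz
    exact (not_not.1 hz).mul_const _

lemma continuous_gaussConv_param (hσ : 0 < σ) {F : X → ℝ → ℝ} {C : ℝ}
    (hmeas : ∀ h, Measurable (F h)) (hC : ∀ h z, |F h z| ≤ C)
    (hcont : ∀ z, Continuous fun h => F h z) (x : ℝ) :
    Continuous fun h => gaussConv σ (F h) x := by
  refine continuous_iff_continuousAt.2 fun h₀ => continuousAt_gaussConv_param hσ hmeas hC ?_ x
  simp [(hcont _).continuousAt]

lemma continuous_gaussConv_comp (hσ : 0 < σ) (hf : IsBddMeasurable f)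
    (hcount : {y | ¬ContinuousAt f y}.Countable) {G : X → ℝ → ℝ}
    (hG : ∀ z, Continuous fun h => G h z) (hmono : ∀ h, StrictMono (G h)) (x : ℝ) :
    Continuous fun h => gaussConv σ (fun z => f (G h z)) x := by
  obtain ⟨C, hC⟩ := hf.exists_abs_le
  refine continuous_iff_continuousAt.2 fun h₀ => continuousAt_gaussConv_param hσ
    (fun h => hf.measurable.comp (hmono h).monotone.measurable) (fun h z => hC _) ?_ x
  refine (hcount.preimage (hmono h₀).injective).mono (Set.compl_subset_compl.2 fun z hz => ?_)
  exact ContinuousAt.comp' (f := fun h => G h z) hz (hG z).continuousAt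

end Param

/-- The Gaussian smoothing of `f` averaged over the dilations `x ↦ t * x` with `t` distributed
according to `ν`. Equation (E) corresponds to the mixture of a Dirac mass at `1` and the uniform
law on `(0, 1]`. -/
noncomputable def mixedConv (ν : Measure ℝ) (σ : ℝ) (f : ℝ → ℝ) (x : ℝ) : ℝ :=
  ∫ t, gaussConv σ f (t * x) ∂ν

variable {ν : Measure ℝ}

section Finite

variable [IsFiniteMeasure ν]

lemma IsBddMeasurable.integrable_gaussConv_mul (hσ : 0 < σ) (hf : IsBddMeasurable f) (x : ℝ) :
    Integrable (fun t => gaussConv σ f (t * x)) ν :=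
  ((isBddMeasurable_gaussConv hσ hf).comp (measurable_mul_const x)).integrable

lemma mixedConv_sub_const_mul (hσ : 0 < σ) (hf : IsBddMeasurable f) (hg : IsBddMeasurable g)
    (c x : ℝ) :
    mixedConv ν σ (fun z => f z - c * g z) x = mixedConv ν σ f x - c * mixedConv ν σ g x := by
  simp only [mixedConv, gaussConv_sub hσ hf (hg.const_mul c), gaussConv_const_mul]
  rw [integral_sub (hf.integrable_gaussConv_mul hσ x)
    ((hg.integrable_gaussConv_mul hσ x).const_mul c), integral_const_mul]

lemma mixedConv_mono (hσ : 0 < σ) (hf : IsBddMeasurable f) (hg : IsBddMeasurable g)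
    (hfg : ∀ z, f z ≤ g z) (x : ℝ) : mixedConv ν σ f x ≤ mixedConv ν σ g x :=
  integral_mono (hf.integrable_gaussConv_mul hσ x) (hg.integrable_gaussConv_mul hσ x)
    fun _ => gaussConv_mono hσ hf hg hfg _

lemma monotone_mixedConv (hσ : 0 < σ) (hν : ∀ᵐ t ∂ν, 0 ≤ t) (hf : IsBddMeasurable f)
    (hmono : Monotone f) : Monotone (mixedConv ν σ f) := fun x y hxy => by
  refine integral_mono_ae (hf.integrable_gaussConv_mul hσ x) (hf.integrable_gaussConv_mul hσ y) ?_
  filter_upwards [hν] with t ht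
  exact monotone_gaussConv hσ hf hmono (mul_le_mul_of_nonneg_left hxy ht)

lemma lipschitzWith_mixedConv (hσ : 0 < σ) (hν : ∀ᵐ t ∂ν, 0 ≤ t)
    (hint : Integrable (fun t => t) ν) (hf : Monotone f) {m M : ℝ} (hmM : ∀ z, f z ∈ Icc m M) :
    LipschitzWith (gq σ 0 * (M - m) * ∫ t, t ∂ν).toNNReal (mixedConv ν σ f) := by
  have hfb := IsBddMeasurable.of_mem_Icc hf.measurable hmM
  have hL : 0 ≤ gq σ 0 * (M - m) * ∫ t, t ∂ν :=
    mul_nonneg (mul_nonneg (gq_pos hσ 0).le (sub_nonneg.2 ((hmM 0).1.trans (hmM 0).2)))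
      (integral_nonneg_of_ae hν)
  refine LipschitzWith.of_le_add_mul _ fun y x => ?_
  rw [Real.coe_toNNReal _ hL]
  rcases le_total y x with hyx | hxy
  · exact (monotone_mixedConv hσ hν hfb hf hyx).trans
      (le_add_of_nonneg_right (mul_nonneg hL dist_nonneg))
  rw [Real.dist_eq, abs_of_nonneg (sub_nonneg.2 hxy), ← sub_le_iff_le_add']
  calc mixedConv ν σ f y - mixedConv ν σ f x
      = ∫ t, (gaussConv σ f (t * y) - gaussConv σ f (t * x)) ∂ν :=
        (integral_sub (hfb.integrable_gaussConv_mul hσ y) (hfb.integrable_gaussConv_mul hσ x)).symm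
    _ ≤ ∫ t, gq σ 0 * (M - m) * (y - x) * t ∂ν := by
        refine integral_mono_ae ((hfb.integrable_gaussConv_mul hσ y).sub
          (hfb.integrable_gaussConv_mul hσ x)) (hint.const_mul _) ?_
        filter_upwards [hν] with t ht
        refine (gaussConv_sub_le_of_monotone hσ hf hmM
          (mul_le_mul_of_nonneg_left hxy ht)).trans_eq ?_
        ring
    _ = gq σ 0 * (M - m) * (∫ t, t ∂ν) * (y - x) := by
        rw [integral_const_mul]
        ring

lemma isBddMeasurable_step : IsBddMeasurable step :=
  .of_mem_Icc measurable_step step_mem_Icc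

lemma strictMono_mixedConv_step (hσ : 0 < σ) (hν : ∀ᵐ t ∂ν, 0 ≤ t) (hν' : ∃ᵐ t ∂ν, 0 < t) :
    StrictMono (mixedConv ν σ step) := fun x y hxy => by
  have hint : ∀ z, Integrable (fun t => gaussConv σ step (t * z)) ν :=
    isBddMeasurable_step.integrable_gaussConv_mul hσ
  rw [← sub_pos, mixedConv, mixedConv, ← integral_sub (hint y) (hint x)]
  refine (integral_pos_iff_support_of_nonneg_ae ?_ ((hint y).sub (hint x))).2 ?_
  · filter_upwards [hν] with t ht
    exact sub_nonneg.2 ((strictMono_gaussConv_step hσ).monotone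
      (mul_le_mul_of_nonneg_left hxy.le ht))
  · refine pos_iff_ne_zero.2 (frequently_ae_iff.1 (hν'.mono fun t ht => ?_))
    exact sub_ne_zero.2 (strictMono_gaussConv_step hσ (mul_lt_mul_of_pos_left hxy ht)).ne'

lemma continuous_mixedConv_param {X : Type*} [TopologicalSpace X] [FirstCountableTopology X]
    (hσ : 0 < σ) {F : X → ℝ → ℝ} {m M : ℝ} (hmeas : ∀ h, Measurable (F h))
    (hmM : ∀ h z, F h z ∈ Icc m M) (hcont : ∀ z, Continuous fun h => F h z) (x : ℝ) :
    Continuous fun h => mixedConv ν σ (F h) x := by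
  have hC : ∀ h z, |F h z| ≤ max |m| |M| := fun h z => abs_le_max_abs_abs (hmM h z).1 (hmM h z).2
  refine continuous_of_dominated (bound := fun _ => max |m| |M|)
    (fun h => ((IsBddMeasurable.mk (hmeas h) ⟨_, hC h⟩).integrable_gaussConv_mul hσ
      x).aestronglyMeasurable)
    (fun h => ae_of_all _ fun t => ?_) (integrable_const _)
    (ae_of_all _ fun t => continuous_gaussConv_param hσ hmeas hC hcont (t * x))
  exact abs_le.2 (gaussConv_mem_Icc hσ (hmeas h) (fun z => abs_le.1 (hC h z)) _)

lemma integral_mixed_gq_mul (hσ : 0 < σ) (hf : IsBddMeasurable f) (x : ℝ) :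
    ∫ z, (∫ t, gq σ (t * x - z) ∂ν) * f z = mixedConv ν σ f x := by
  have hmeas : Measurable fun p : ℝ × ℝ => f p.2 * gq σ (p.1 * x - p.2) :=
    (hf.measurable.comp measurable_snd).mul ((continuous_gq σ).measurable.comp (by fun_prop))
  have hint : Integrable (fun p : ℝ × ℝ => f p.2 * gq σ (p.1 * x - p.2)) (ν.prod volume) := by
    obtain ⟨C, hC⟩ := hf.exists_abs_le
    refine (integrable_prod_iff hmeas.aestronglyMeasurable).2
      ⟨ae_of_all _ fun t => hf.integrable_mul_gq hσ (t * x), ?_⟩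
    have habs : IsBddMeasurable fun z => |f z| := ⟨hf.measurable.abs, C, by simpa using hC⟩
    refine (habs.integrable_gaussConv_mul hσ x).congr (ae_of_all _ fun t => ?_)
    simp only [gaussConv, Real.norm_eq_abs, abs_mul, abs_of_pos (gq_pos hσ _)]
  simp only [mixedConv, gaussConv]
  rw [integral_integral_swap hint]
  simp only [integral_const_mul, mul_comm]

end Finite

variable [IsProbabilityMeasure ν]

lemma mixedConv_const (hσ : 0 < σ) (c x : ℝ) : mixedConv ν σ (fun _ => c) x = c := by
  simp [mixedConv, gaussConv_const hσ]

lemma mixedConv_step_mem_Ioo (hσ : 0 < σ) (hν : ∀ᵐ t ∂ν, 0 ≤ t) (hν' : ∃ᵐ t ∂ν, 0 < t) (x : ℝ) :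
    mixedConv ν σ step x ∈ Ioo (0 : ℝ) 1 := by
  have hstrict := strictMono_mixedConv_step hσ hν hν'
  constructor
  · refine lt_of_le_of_lt ?_ (hstrict (sub_one_lt x))
    exact integral_nonneg fun t => (gaussConv_mem_Icc hσ measurable_step step_mem_Icc _).1
  · refine (hstrict (lt_add_one x)).trans_le ?_
    simpa only [mixedConv_const hσ] using mixedConv_mono (ν := ν) hσ isBddMeasurable_step
      (.const 1) (fun z => (step_mem_Icc z).2) (x + 1)

end Smoothing

section TruncatedMoments

variable {Ω : Type*} [MeasurableSpace Ω] {P : Measure Ω} {V : Ω → ℝ} {m M c y z : ℝ}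

lemma Phim_add_Phip (hV : Integrable V P) (y : ℝ) :
    Phim P V y + Phip P V y = ∫ ω, V ω ∂P := by
  have hset : NullMeasurableSet {ω | V ω ≤ y} P :=
    nullMeasurableSet_le hV.aemeasurable aemeasurable_const
  have hcompl : {ω | V ω > y} = {ω | V ω ≤ y}ᶜ := by
    ext
    simp
  rw [Phim, Phip, hcompl, integral_add_compl₀ hset hV]

lemma Phim_eq_sub_Phip (hV : Integrable V P) :
    Phim P V = fun y => (∫ ω, V ω ∂P) - Phip P V y :=
  funext fun y => eq_sub_of_add_eq (Phim_add_Phip hV y)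

/-- The excess `Φ⁺(y) − E[V] Π⁺(y)`, which measures how far conditioning on the event `V > y`
raises the mean of `V`. -/
noncomputable def meanExcess (P : Measure Ω) (V : Ω → ℝ) (y : ℝ) : ℝ :=
  Phip P V y - (∫ ω, V ω ∂P) * Pip P V y

section Finite

variable [IsFiniteMeasure P]

lemma integrable_ite_lt_sub (hV : Integrable V P) (c y : ℝ) :
    Integrable (fun ω => if y < V ω then V ω - c else 0) P :=
  (hV.sub (integrable_const c)).indicator₀ (nullMeasurableSet_lt aemeasurable_const hV.aemeasurable)

lemma Phip_sub_mul_Pip (hV : Integrable V P) (c y : ℝ) :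
    Phip P V y - c * Pip P V y = ∫ ω, (if y < V ω then V ω - c else 0) ∂P := by
  have hset : NullMeasurableSet {ω | y < V ω} P :=
    nullMeasurableSet_lt aemeasurable_const hV.aemeasurable
  calc Phip P V y - c * Pip P V y = ∫ ω in {ω | y < V ω}, (V ω - c) ∂P := by
        rw [integral_sub hV.integrableOn (integrable_const c), setIntegral_const, smul_eq_mul,
          mul_comm]
        rfl
    _ = ∫ ω, (if y < V ω then V ω - c else 0) ∂P := (integral_indicator₀ hset).symm

lemma antitone_Pip : Antitone (Pip P V) := fun _ _ hyz =>
  measureReal_mono fun _ hω => hyz.trans_lt hω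

lemma monotone_Pim : Monotone (Pim P V) := fun _ _ hyz =>
  measureReal_mono fun _ hω => le_trans hω hyz

lemma monotoneOn_Phip_sub_mul_Pip (hV : Integrable V P) (c : ℝ) :
    MonotoneOn (fun y => Phip P V y - c * Pip P V y) (Iic c) := fun y _ z hz hyz => by
  simp only [Phip_sub_mul_Pip hV]
  refine integral_mono (integrable_ite_lt_sub hV c y) (integrable_ite_lt_sub hV c z) fun ω => ?_
  have := mem_Iic.1 hz
  dsimp only
  split_ifs <;> linarith

lemma antitoneOn_Phip_sub_mul_Pip (hV : Integrable V P) (c : ℝ) :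
    AntitoneOn (fun y => Phip P V y - c * Pip P V y) (Ici c) := fun y hy z _ hyz => by
  simp only [Phip_sub_mul_Pip hV]
  refine integral_mono (integrable_ite_lt_sub hV c z) (integrable_ite_lt_sub hV c y) fun ω => ?_
  have := mem_Ici.1 hy
  dsimp only
  split_ifs <;> linarith

lemma Phip_sub_mul_Pip_nonneg (hV : Integrable V P) (hcy : c ≤ y) :
    0 ≤ Phip P V y - c * Pip P V y := by
  rw [Phip_sub_mul_Pip hV]
  refine integral_nonneg fun ω => ?_
  dsimp only [Pi.zero_apply]
  split_ifs <;> linarith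

lemma Phip_sub_mul_Pip_self_pos (hV : Integrable V P) (hy : 0 < P {ω | V ω > y}) :
    0 < Phip P V y - y * Pip P V y := by
  rw [Phip_sub_mul_Pip hV, integral_pos_iff_support_of_nonneg (fun ω => ?_)
    (integrable_ite_lt_sub hV y y)]
  · refine hy.trans_le (measure_mono fun ω (hω : y < V ω) => ?_)
    simpa only [Function.mem_support, if_pos hω] using (sub_pos.2 hω).ne'
  · dsimp only [Pi.zero_apply]
    split_ifs <;> linarith

lemma Phip_mul_Pip_le (hV : Integrable V P) (hyz : y ≤ z) :
    Phip P V y * Pip P V z ≤ Phip P V z * Pip P V y := by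
  have hincr : Phip P V y - z * Pip P V y ≤ Phip P V z - z * Pip P V z :=
    monotoneOn_Phip_sub_mul_Pip hV z hyz self_mem_Iic hyz
  have hPip : Pip P V z ≤ Pip P V y := antitone_Pip hyz
  have hPip_nonneg : 0 ≤ Pip P V z := measureReal_nonneg
  nlinarith [mul_nonneg (Phip_sub_mul_Pip_nonneg hV (le_refl z)) (sub_nonneg.2 hPip),
    mul_le_mul_of_nonneg_right hincr hPip_nonneg]

lemma Pim_add_Pip (hV : AEMeasurable V P) (y : ℝ) : Pim P V y + Pip P V y = P.real univ := by
  have hset : NullMeasurableSet {ω | V ω ≤ y} P := nullMeasurableSet_le hV aemeasurable_const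
  have hcompl : {ω | V ω > y} = {ω | V ω ≤ y}ᶜ := by
    ext
    simp
  rw [Pim, Pip, hcompl, ← ENNReal.toReal_add (measure_ne_top _ _) (measure_ne_top _ _),
    measure_add_measure_compl₀ hset, measureReal_def]

lemma Phim_sub_mul_Pim (hV : Integrable V P) (c y : ℝ) :
    Phim P V y - c * Pim P V y = (∫ ω, (V ω - c) ∂P) - (Phip P V y - c * Pip P V y) := by
  rw [integral_sub hV (integrable_const c), integral_const, smul_eq_mul]
  linear_combination Phim_add_Phip hV y - c * Pim_add_Pip hV.aemeasurable y

lemma Phim_sub_mul_Pim_nonpos (hV : Integrable V P) (hyc : y ≤ c) :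
    Phim P V y - c * Pim P V y ≤ 0 := by
  rw [Phim_sub_mul_Pim hV, sub_nonpos, Phip_sub_mul_Pip hV]
  refine integral_mono (hV.sub (integrable_const c)) (integrable_ite_lt_sub hV c y) fun ω => ?_
  dsimp only
  split_ifs <;> linarith

lemma Phim_mul_Pim_le (hV : Integrable V P) (hyz : y ≤ z) :
    Phim P V y * Pim P V z ≤ Phim P V z * Pim P V y := by
  have hincr : Phim P V y - y * Pim P V y ≤ Phim P V z - y * Pim P V z := by
    rw [Phim_sub_mul_Pim hV, Phim_sub_mul_Pim hV]
    exact sub_le_sub_left (antitoneOn_Phip_sub_mul_Pip hV y self_mem_Ici hyz hyz) _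
  have hPim : Pim P V y ≤ Pim P V z := monotone_Pim hyz
  have hPim_nonneg : 0 ≤ Pim P V y := measureReal_nonneg
  nlinarith [mul_nonneg (sub_nonneg.2 (Phim_sub_mul_Pim_nonpos hV (le_refl y)))
    (sub_nonneg.2 hPim), mul_le_mul_of_nonneg_right hincr hPim_nonneg]

lemma min_meanExcess_le (hV : Integrable V P) {a b : ℝ} (hy : y ∈ Icc a b) :
    min (meanExcess P V a) (meanExcess P V b) ≤ meanExcess P V y := by
  rcases le_total (∫ ω, V ω ∂P) y with hvy | hyv
  · exact min_le_of_right_le (antitoneOn_Phip_sub_mul_Pip hV _ hvy (hvy.trans hy.2) hy.2)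
  · exact min_le_of_left_le (monotoneOn_Phip_sub_mul_Pip hV _ (hy.1.trans hyv) hyv hy.1)

lemma isBddMeasurable_Pip : IsBddMeasurable (Pip P V) :=
  .of_mem_Icc antitone_Pip.measurable fun _ =>
    ⟨measureReal_nonneg, measureReal_mono (subset_univ _)⟩

lemma isBddMeasurable_Pim : IsBddMeasurable (Pim P V) :=
  .of_mem_Icc monotone_Pim.measurable fun _ =>
    ⟨measureReal_nonneg, measureReal_mono (subset_univ _)⟩

namespace SuppIoo

lemma Pip_pos (hsupp : SuppIoo P V m M) (hy : y < M) : 0 < Pip P V y :=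
  ENNReal.toReal_pos (hsupp.2.2.1 y hy).ne' (measure_ne_top _ _)

lemma Pim_pos (hsupp : SuppIoo P V m M) (hy : m < y) : 0 < Pim P V y :=
  ENNReal.toReal_pos (hsupp.2.2.2 y hy).ne' (measure_ne_top _ _)

lemma Phip_le_mul_Pip (hsupp : SuppIoo P V m M) (hV : Integrable V P) (y : ℝ) :
    Phip P V y ≤ M * Pip P V y := by
  rw [← sub_nonpos, Phip_sub_mul_Pip hV]
  refine integral_nonpos_of_ae (hsupp.2.1.mono fun ω hω => ?_)
  dsimp only [Pi.zero_apply]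
  split_ifs <;> linarith [hω.2]

lemma mul_Pim_le_Phim (hsupp : SuppIoo P V m M) (hV : Integrable V P) (y : ℝ) :
    m * Pim P V y ≤ Phim P V y := by
  rw [← sub_nonneg, Phim_sub_mul_Pim hV, sub_nonneg, Phip_sub_mul_Pip hV]
  refine integral_mono_ae (integrable_ite_lt_sub hV m y) (hV.sub (integrable_const m))
    (hsupp.2.1.mono fun ω hω => ?_)
  dsimp only
  split_ifs <;> linarith [hω.1]

lemma antitone_Phip_sub_mul_Pip (hsupp : SuppIoo P V m M) (hV : Integrable V P) :
    Antitone fun y => Phip P V y - m * Pip P V y := fun y z hyz => by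
  simp only [Phip_sub_mul_Pip hV]
  refine integral_mono_ae (integrable_ite_lt_sub hV m z) (integrable_ite_lt_sub hV m y)
    (hsupp.2.1.mono fun ω hω => ?_)
  dsimp only
  split_ifs <;> linarith [hω.1]

lemma isBddMeasurable_Phip (hsupp : SuppIoo P V m M) (hV : Integrable V P) :
    IsBddMeasurable (Phip P V) where
  measurable := by
    rw [show Phip P V = (fun y => Phip P V y - m * Pip P V y) + fun y => m * Pip P V y from
      funext fun y => (sub_add_cancel _ _).symm]
    exact (hsupp.antitone_Phip_sub_mul_Pip hV).measurable.add
      (antitone_Pip.measurable.const_mul m)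
  exists_abs_le := ⟨∫ ω, |V ω| ∂P, fun _ => (abs_integral_le_integral_abs).trans
    (setIntegral_le_integral hV.abs (ae_of_all _ fun _ => abs_nonneg _))⟩

lemma countable_not_continuousAt_Phip (hsupp : SuppIoo P V m M) (hV : Integrable V P) :
    {y | ¬ContinuousAt (Phip P V) y}.Countable := by
  refine ((hsupp.antitone_Phip_sub_mul_Pip hV).countable_not_continuousAt.union
    (antitone_Pip (P := P) (V := V)).countable_not_continuousAt).mono fun y hy => ?_
  by_contra hcont
  simp only [mem_union, mem_ofPred_eq, not_or, not_not] at hcont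
  refine hy ((hcont.1.add (hcont.2.const_mul m)).congr (.of_forall fun z => ?_))
  exact sub_add_cancel _ _

lemma isBddMeasurable_Phim (hsupp : SuppIoo P V m M) (hV : Integrable V P) :
    IsBddMeasurable (Phim P V) := by
  rw [Phim_eq_sub_Phip hV]
  exact (IsBddMeasurable.const _).sub (hsupp.isBddMeasurable_Phip hV)

lemma countable_not_continuousAt_Phim (hsupp : SuppIoo P V m M) (hV : Integrable V P) :
    {y | ¬ContinuousAt (Phim P V) y}.Countable := by
  rw [Phim_eq_sub_Phip hV]
  exact (hsupp.countable_not_continuousAt_Phip hV).mono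
    (compl_subset_compl.2 fun _ hy => ContinuousAt.sub continuousAt_const hy)

lemma isBddMeasurable_meanExcess (hsupp : SuppIoo P V m M) (hV : Integrable V P) :
    IsBddMeasurable (meanExcess P V) :=
  (hsupp.isBddMeasurable_Phip hV).sub (isBddMeasurable_Pip.const_mul _)

end SuppIoo

end Finite

variable [IsProbabilityMeasure P]

lemma Pip_mem_Icc (y : ℝ) : Pip P V y ∈ Icc (0 : ℝ) 1 :=
  ⟨measureReal_nonneg, measureReal_le_one⟩

lemma meanExcess_eq_neg (hV : Integrable V P) (y : ℝ) :
    meanExcess P V y = -(Phim P V y - (∫ ω, V ω ∂P) * Pim P V y) := by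
  have hcentered : ∫ ω, (V ω - ∫ ω', V ω' ∂P) ∂P = 0 := by
    simp [integral_sub hV (integrable_const _)]
  rw [Phim_sub_mul_Pim hV, hcentered, zero_sub, neg_neg, meanExcess]

lemma meanExcess_nonneg (hV : Integrable V P) (y : ℝ) : 0 ≤ meanExcess P V y := by
  rcases le_total (∫ ω, V ω ∂P) y with hy | hy
  · exact Phip_sub_mul_Pip_nonneg hV hy
  · rw [meanExcess_eq_neg hV]
    exact neg_nonneg.2 (Phim_sub_mul_Pim_nonpos hV hy)

lemma SuppIoo.meanExcess_pos (hsupp : SuppIoo P V m M) (hV : Integrable V P) (hy : y ∈ Ioo m M) :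
    0 < meanExcess P V y := by
  rcases lt_or_ge y (∫ ω, V ω ∂P) with hyv | hvy
  · rw [meanExcess_eq_neg hV]
    nlinarith [Phim_sub_mul_Pim_nonpos hV (le_refl y),
      mul_pos (sub_pos.2 hyv) (hsupp.Pim_pos hy.1)]
  · rw [meanExcess]
    nlinarith [Phip_sub_mul_Pip_self_pos hV (hsupp.2.2.1 y hy.2),
      mul_nonneg (sub_nonneg.2 hvy) (hsupp.Pip_pos hy.2).le]

lemma SuppIoo.integral_mem_Ioo (hsupp : SuppIoo P V m M) (hV : Integrable V P) :
    ∫ ω, V ω ∂P ∈ Ioo m M := by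
  obtain ⟨y, hmy, hyM⟩ := exists_between hsupp.1
  have hPip := hsupp.Pip_pos hyM
  have hPim := hsupp.Pim_pos hmy
  have mul_Pim_add_mul_Pip : ∀ c, c * Pim P V y + c * Pip P V y = c := fun c => by
    rw [← mul_add, Pim_add_Pip hV.aemeasurable, probReal_univ, mul_one]
  rw [← Phim_add_Phip hV y]
  constructor
  · calc m = m * Pim P V y + m * Pip P V y := (mul_Pim_add_mul_Pip m).symm
      _ < m * Pim P V y + y * Pip P V y := by gcongr
      _ ≤ Phim P V y + Phip P V y :=
        add_le_add (hsupp.mul_Pim_le_Phim hV y) (sub_nonneg.1 (Phip_sub_mul_Pip_nonneg hV le_rfl))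
  · calc Phim P V y + Phip P V y ≤ y * Pim P V y + M * Pip P V y :=
        add_le_add (sub_nonpos.1 (Phim_sub_mul_Pim_nonpos hV le_rfl)) (hsupp.Phip_le_mul_Pip hV y)
      _ < M * Pim P V y + M * Pip P V y := by gcongr
      _ = M := mul_Pim_add_mul_Pip M

end TruncatedMoments

section ConditionalMeans

variable {Ω : Type*} [MeasurableSpace Ω] {P : Measure Ω} {V : Ω → ℝ} {m M σ : ℝ} {g : ℝ → ℝ}

section Finite

variable [IsFiniteMeasure P]

lemma gaussConv_Pip_pos (hsupp : SuppIoo P V m M) (hσ : 0 < σ) (hg : Measurable g)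
    (hgM : ∀ z, g z < M) (x : ℝ) : 0 < gaussConv σ (fun z => Pip P V (g z)) x :=
  gaussConv_pos hσ (isBddMeasurable_Pip.comp hg) (fun z => hsupp.Pip_pos (hgM z)) x

lemma gaussConv_Pim_pos (hsupp : SuppIoo P V m M) (hσ : 0 < σ) (hg : Measurable g)
    (hmg : ∀ z, m < g z) (x : ℝ) : 0 < gaussConv σ (fun z => Pim P V (g z)) x :=
  gaussConv_pos hσ (isBddMeasurable_Pim.comp hg) (fun z => hsupp.Pim_pos (hmg z)) x

lemma gaussConv_meanExcess (hsupp : SuppIoo P V m M) (hV : Integrable V P) (hσ : 0 < σ)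
    (hg : Measurable g) (x : ℝ) :
    gaussConv σ (fun z => meanExcess P V (g z)) x =
      gaussConv σ (fun z => Phip P V (g z)) x -
        (∫ ω, V ω ∂P) * gaussConv σ (fun z => Pip P V (g z)) x := by
  rw [← gaussConv_const_mul]
  exact gaussConv_sub hσ ((hsupp.isBddMeasurable_Phip hV).comp hg)
    ((isBddMeasurable_Pip.comp hg).const_mul _) x

lemma monotone_phip (hsupp : SuppIoo P V m M) (hV : Integrable V P) (hσ : 0 < σ)
    (hg : Monotone g) (hgM : ∀ z, g z < M) : Monotone (phip P V σ g) := fun x y hxy => by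
  have hpos := gaussConv_Pip_pos hsupp hσ hg.measurable hgM
  exact (div_le_div_iff₀ (hpos x) (hpos y)).2 <| gaussConv_mul_gaussConv_le hσ
    ((hsupp.isBddMeasurable_Phip hV).comp hg.measurable) (isBddMeasurable_Pip.comp hg.measurable)
    (fun z w hzw => Phip_mul_Pip_le hV (hg hzw)) hxy

lemma monotone_phim (hsupp : SuppIoo P V m M) (hV : Integrable V P) (hσ : 0 < σ)
    (hg : Monotone g) (hmg : ∀ z, m < g z) : Monotone (phim P V σ g) := fun x y hxy => by
  have hpos := gaussConv_Pim_pos hsupp hσ hg.measurable hmg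
  exact (div_le_div_iff₀ (hpos x) (hpos y)).2 <| gaussConv_mul_gaussConv_le hσ
    ((hsupp.isBddMeasurable_Phim hV).comp hg.measurable) (isBddMeasurable_Pim.comp hg.measurable)
    (fun z w hzw => Phim_mul_Pim_le hV (hg hzw)) hxy

lemma continuous_phig_param {X : Type*} [TopologicalSpace X] [FirstCountableTopology X]
    (hsupp : SuppIoo P V m M) (hV : Integrable V P) (hσ : 0 < σ) {G : X → ℝ → ℝ}
    (hG : ∀ z, Continuous fun h => G h z) (hmono : ∀ h, StrictMono (G h))
    (hmM : ∀ h z, G h z ∈ Ioo m M) (x : ℝ) : Continuous fun h => phig P V σ (G h) x := by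
  have hmeas : ∀ h, Measurable (G h) := fun h => (hmono h).monotone.measurable
  have hA : Continuous fun h => gaussConv σ (fun z => Phip P V (G h z)) x :=
    continuous_gaussConv_comp hσ (hsupp.isBddMeasurable_Phip hV)
      (hsupp.countable_not_continuousAt_Phip hV) hG hmono x
  have hB : Continuous fun h => gaussConv σ (fun z => Pip P V (G h z)) x :=
    continuous_gaussConv_comp hσ isBddMeasurable_Pip
      antitone_Pip.countable_not_continuousAt hG hmono x
  have hA' : Continuous fun h => gaussConv σ (fun z => Phim P V (G h z)) x :=
    continuous_gaussConv_comp hσ (hsupp.isBddMeasurable_Phim hV)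
      (hsupp.countable_not_continuousAt_Phim hV) hG hmono x
  have hB' : Continuous fun h => gaussConv σ (fun z => Pim P V (G h z)) x :=
    continuous_gaussConv_comp hσ isBddMeasurable_Pim
      monotone_Pim.countable_not_continuousAt hG hmono x
  unfold phig
  split_ifs
  · exact hA.div hB fun h => (gaussConv_Pip_pos hsupp hσ (hmeas h) (fun z => (hmM h z).2) x).ne'
  · exact hA'.div hB' fun h =>
      (gaussConv_Pim_pos hsupp hσ (hmeas h) (fun z => (hmM h z).1) x).ne'

end Finite

variable [IsProbabilityMeasure P]

lemma integral_add_gaussConv_meanExcess_le_phip (hsupp : SuppIoo P V m M) (hV : Integrable V P)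
    (hσ : 0 < σ) (hg : Measurable g) (hgM : ∀ z, g z < M) (x : ℝ) :
    (∫ ω, V ω ∂P) + gaussConv σ (fun z => meanExcess P V (g z)) x ≤ phip P V σ g x := by
  have hB := gaussConv_Pip_pos hsupp hσ hg hgM x
  have hB_le : gaussConv σ (fun z => Pip P V (g z)) x ≤ 1 :=
    (gaussConv_mem_Icc hσ (isBddMeasurable_Pip.comp hg).measurable (fun z => Pip_mem_Icc _) x).2
  have hexcess : 0 ≤ gaussConv σ (fun z => meanExcess P V (g z)) x :=
    integral_nonneg fun z => mul_nonneg (meanExcess_nonneg hV _) (gq_pos hσ _).le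
  calc (∫ ω, V ω ∂P) + gaussConv σ (fun z => meanExcess P V (g z)) x
      ≤ (∫ ω, V ω ∂P) + gaussConv σ (fun z => meanExcess P V (g z)) x /
          gaussConv σ (fun z => Pip P V (g z)) x := by
        gcongr
        exact le_div_self hexcess hB hB_le
    _ = gaussConv σ (fun z => Phip P V (g z)) x / gaussConv σ (fun z => Pip P V (g z)) x := by
        rw [gaussConv_meanExcess hsupp hV hσ hg, sub_div, mul_div_cancel_right₀ _ hB.ne',
          add_sub_cancel]

lemma phip_mem_Icc (hsupp : SuppIoo P V m M) (hV : Integrable V P) (hσ : 0 < σ)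
    (hg : Measurable g) (hgM : ∀ z, g z < M) (x : ℝ) :
    phip P V σ g x ∈ Icc (∫ ω, V ω ∂P) M := by
  constructor
  · refine le_trans ?_ (integral_add_gaussConv_meanExcess_le_phip hsupp hV hσ hg hgM x)
    exact le_add_of_nonneg_right
      (integral_nonneg fun z => mul_nonneg (meanExcess_nonneg hV _) (gq_pos hσ _).le)
  · refine (div_le_iff₀ (gaussConv_Pip_pos hsupp hσ hg hgM x)).2 ?_
    rw [← gaussConv_const_mul]
    exact gaussConv_mono hσ ((hsupp.isBddMeasurable_Phip hV).comp hg)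
      ((isBddMeasurable_Pip.comp hg).const_mul M) (fun z => hsupp.Phip_le_mul_Pip hV _) x

lemma phim_mem_Icc (hsupp : SuppIoo P V m M) (hV : Integrable V P) (hσ : 0 < σ)
    (hg : Measurable g) (hmg : ∀ z, m < g z) (x : ℝ) :
    phim P V σ g x ∈ Icc m (∫ ω, V ω ∂P) := by
  have hpos := gaussConv_Pim_pos hsupp hσ hg hmg x
  have hPhim := (hsupp.isBddMeasurable_Phim hV).comp hg
  have hPim := fun c => (isBddMeasurable_Pim (P := P) (V := V)).comp hg |>.const_mul c
  constructor
  · refine (le_div_iff₀ hpos).2 ?_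
    rw [← gaussConv_const_mul]
    exact gaussConv_mono hσ (hPim m) hPhim (fun z => hsupp.mul_Pim_le_Phim hV _) x
  · refine (div_le_iff₀ hpos).2 ?_
    rw [← gaussConv_const_mul]
    refine gaussConv_mono hσ hPhim (hPim _) (fun z => ?_) x
    have := meanExcess_nonneg hV (g z)
    rwa [meanExcess_eq_neg hV, neg_nonneg, sub_nonpos] at this

lemma exists_forall_integral_add_le_phip (hsupp : SuppIoo P V m M) (hV : Integrable V P)
    (hσ : 0 < σ) {lo hi : ℝ → ℝ} (hlo : Measurable lo) (hhi : Measurable hi)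
    (hlo_mem : ∀ z, lo z ∈ Ioo m M) (hhi_mem : ∀ z, hi z ∈ Ioo m M) (x : ℝ) :
    ∃ δ > 0, ∀ g, Measurable g → (∀ z, g z ∈ Icc (lo z) (hi z)) →
      (∫ ω, V ω ∂P) + δ ≤ phip P V σ g x := by
  have hexcess := hsupp.isBddMeasurable_meanExcess hV
  have hmin := (hexcess.comp hlo).min (hexcess.comp hhi)
  refine ⟨_, gaussConv_pos hσ hmin (fun z => lt_min (hsupp.meanExcess_pos hV (hlo_mem z))
    (hsupp.meanExcess_pos hV (hhi_mem z))) x, fun g hg hmem => ?_⟩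
  refine le_trans ?_ (integral_add_gaussConv_meanExcess_le_phip hsupp hV hσ hg
    (fun z => (hmem z).2.trans_lt (hhi_mem z).2) x)
  exact add_le_add_right
    (gaussConv_mono hσ hmin (hexcess.comp hg) (fun z => min_meanExcess_le hV (hmem z)) x) _

lemma phig_mem_Icc_step (hsupp : SuppIoo P V m M) (hV : Integrable V P) (hσ : 0 < σ)
    (hg : Measurable g) (hgmM : ∀ z, g z ∈ Ioo m M) (x : ℝ) :
    phig P V σ g x ∈ Icc (m + ((∫ ω, V ω ∂P) - m) * step x)
      ((∫ ω, V ω ∂P) + (M - ∫ ω, V ω ∂P) * step x) := by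
  by_cases hx : 0 ≤ x
  · simpa [phig, step, hx] using phip_mem_Icc hsupp hV hσ hg (fun z => (hgmM z).2) x
  · simpa [phig, step, hx] using phim_mem_Icc hsupp hV hσ hg (fun z => (hgmM z).1) x

lemma phig_mem_Icc (hsupp : SuppIoo P V m M) (hV : Integrable V P) (hσ : 0 < σ)
    (hg : Measurable g) (hgmM : ∀ z, g z ∈ Ioo m M) (x : ℝ) : phig P V σ g x ∈ Icc m M := by
  have hv := hsupp.integral_mem_Ioo hV
  unfold phig
  split_ifs
  · exact Icc_subset_Icc_left hv.1.le (phip_mem_Icc hsupp hV hσ hg (fun z => (hgmM z).2) x)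
  · exact Icc_subset_Icc_right hv.2.le (phim_mem_Icc hsupp hV hσ hg (fun z => (hgmM z).1) x)

lemma monotone_phig_sub_mul_step (hsupp : SuppIoo P V m M) (hV : Integrable V P) (hσ : 0 < σ)
    (hg : Monotone g) (hgmM : ∀ z, g z ∈ Ioo m M) {δ : ℝ}
    (hδ : (∫ ω, V ω ∂P) + δ ≤ phip P V σ g 0) :
    Monotone fun x => phig P V σ g x - δ * step x := fun x y hxy => by
  have hp := monotone_phip hsupp hV hσ hg fun z => (hgmM z).2
  have hm := phim_mem_Icc hsupp hV hσ hg.measurable fun z => (hgmM z).1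
  rcases le_or_gt 0 x with hx | hx
  · simpa [phig, step, hx, hx.trans hxy] using hp hxy
  rcases le_or_gt 0 y with hy | hy
  · simp only [phig, step, hx.not_ge, hy, if_true, if_false, mem_Ici, not_false_eq_true,
      indicator_of_mem, indicator_of_notMem, Pi.one_apply, mul_one, mul_zero, sub_zero]
    linarith [hp hy, (hm x).2]
  · simpa [phig, step, hx.not_ge, hy.not_ge] using
      monotone_phim hsupp hV hσ hg (fun z => (hgmM z).1) hxy

lemma monotone_phig (hsupp : SuppIoo P V m M) (hV : Integrable V P) (hσ : 0 < σ)
    (hg : Monotone g) (hgmM : ∀ z, g z ∈ Ioo m M) : Monotone (phig P V σ g) := by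
  simpa using monotone_phig_sub_mul_step hsupp hV hσ hg hgmM (δ := 0)
    (by simpa using (phip_mem_Icc hsupp hV hσ hg.measurable (fun z => (hgmM z).2) 0).1)

end ConditionalMeans

section FixedPoint

open scoped NNReal

/-- The candidate solutions: functions lying between `m + (v - m) * s` and `v + (M - v) * s` whose
growth dominates that of `δ * s`. The smoothing operator sends the class for a profile `s` to the
class for the smoothed profile, while `g ↦ φ_g` brings it back to the class for the unit step. -/
def profile (s : ℝ → ℝ) (m v M δ : ℝ) : Set (ℝ → ℝ) :=
  {g | Monotone (fun x => g x - δ * s x) ∧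
    ∀ x, g x ∈ Icc (m + (v - m) * s x) (v + (M - v) * s x)}

section Profile

variable {s g : ℝ → ℝ} {m v M δ : ℝ}

lemma convex_profile : Convex ℝ (profile s m v M δ) := by
  rintro f ⟨hf, hf_mem⟩ g ⟨hg, hg_mem⟩ a b ha hb hab
  refine ⟨fun x y hxy => ?_, fun x => convex_Icc _ _ (hf_mem x) (hg_mem x) ha hb hab⟩
  have hsum : ∀ z, (a • f + b • g) z - δ * s z = a * (f z - δ * s z) + b * (g z - δ * s z) := by
    intro z
    simp only [Pi.add_apply, Pi.smul_apply, smul_eq_mul]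
    linear_combination (δ * s z) * hab
  simp only [hsum]
  exact add_le_add (mul_le_mul_of_nonneg_left (hf hxy) ha) (mul_le_mul_of_nonneg_left (hg hxy) hb)

lemma isCompact_profile : IsCompact (profile s m v M δ) := by
  have hclosed : IsClosed {g : ℝ → ℝ | Monotone fun x => g x - δ * s x} :=
    isClosed_monotone.preimage (f := fun (g : ℝ → ℝ) x => g x - δ * s x) (by fun_prop)
  have hbox : IsCompact (univ.pi fun x => Icc (m + (v - m) * s x) (v + (M - v) * s x)) :=
    isCompact_univ_pi fun x => isCompact_Icc
  convert hbox.inter_left hclosed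
  ext g
  exact and_congr_right fun _ => (mem_univ_pi (f := g)).symm

lemma strictMono_of_mem_profile (hδ : 0 < δ) (hs : StrictMono s) (hg : g ∈ profile s m v M δ) :
    StrictMono g := by
  simpa using hg.1.add_strictMono (hs.const_mul hδ)

lemma add_sub_mul_mem_Ioo {t : ℝ} (ht : t ∈ Ioo (0 : ℝ) 1) {a b : ℝ} (hab : a < b) :
    a + (b - a) * t ∈ Ioo a b := by
  constructor <;> nlinarith [mul_pos (sub_pos.2 hab) ht.1, mul_pos (sub_pos.2 hab) (sub_pos.2 ht.2)]

end Profile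

lemma convex_setOf_lipschitzWith (L : ℝ≥0) : Convex ℝ {g : ℝ → ℝ | LipschitzWith L g} := by
  intro f hf g hg a b ha hb hab
  refine LipschitzWith.of_dist_le_mul fun x y => ?_
  calc dist ((a • f + b • g) x) ((a • f + b • g) y)
      ≤ dist (a • f x) (a • f y) + dist (b • g x) (b • g y) := dist_add_add_le _ _ _ _
    _ ≤ a * (L * dist x y) + b * (L * dist x y) := by
        rw [dist_smul₀, dist_smul₀, Real.norm_of_nonneg ha, Real.norm_of_nonneg hb]
        gcongr
        exacts [hf.dist_le_mul x y, hg.dist_le_mul x y]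
    _ = L * dist x y := by rw [← add_mul, hab, one_mul]

variable {Ω : Type*} [MeasurableSpace Ω] {P : Measure Ω} [IsProbabilityMeasure P] {V : Ω → ℝ}
  {σ m v M δ : ℝ} {f : ℝ → ℝ}

lemma continuousOn_mixedConv_phig {ν : Measure ℝ} [IsFiniteMeasure ν] (hsupp : SuppIoo P V m M)
    (hV : Integrable V P) (hσ : 0 < σ) {K : Set (ℝ → ℝ)} (hK : IsCompact K)
    (hcont : ∀ g ∈ K, Continuous g) (hmono : ∀ g ∈ K, StrictMono g)
    (hmM : ∀ g ∈ K, ∀ x, g x ∈ Ioo m M) :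
    ContinuousOn (fun g => mixedConv ν σ (phig P V σ g)) K := by
  have : FirstCountableTopology K := firstCountableTopology_of_isCompact hK hcont
  have hmeas : ∀ g : K, Measurable (phig P V σ g) := fun g =>
    (monotone_phig hsupp hV hσ (hmono g g.2).monotone (hmM g g.2)).measurable
  have hphig : ∀ z, Continuous fun g : K => phig P V σ g z :=
    continuous_phig_param hsupp hV hσ (fun z => (continuous_apply z).comp continuous_subtype_val)
      (fun g => hmono g g.2) fun g => hmM g g.2
  refine continuousOn_iff_continuous_domRestrict.2 (continuous_pi fun x => ?_)
  exact continuous_mixedConv_param hσ hmeas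
    (fun g => phig_mem_Icc hsupp hV hσ (hmono g g.2).monotone.measurable (hmM g g.2)) hphig x

variable {ν : Measure ℝ} [IsProbabilityMeasure ν]

lemma mixedConv_mem_profile (hσ : 0 < σ) (hν : ∀ᵐ t ∂ν, 0 ≤ t) (hf : IsBddMeasurable f)
    (hmem : f ∈ profile step m v M δ) :
    mixedConv ν σ f ∈ profile (mixedConv ν σ step) m v M δ := by
  have hsub : ∀ c, IsBddMeasurable fun z => f z - c * step z := fun c =>
    hf.sub (isBddMeasurable_step.const_mul c)
  have hconv : ∀ c x, mixedConv ν σ (fun z => f z - c * step z) x =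
      mixedConv ν σ f x - c * mixedConv ν σ step x :=
    mixedConv_sub_const_mul hσ hf isBddMeasurable_step
  refine ⟨?_, fun x => ⟨?_, ?_⟩⟩
  · simpa only [← hconv] using monotone_mixedConv hσ hν (hsub δ) hmem.1
  · rw [← le_sub_iff_add_le, ← hconv]
    simpa only [mixedConv_const hσ] using mixedConv_mono (ν := ν) hσ (.const m) (hsub _)
      (fun z => le_sub_iff_add_le.2 (hmem.2 z).1) x
  · rw [← sub_le_iff_le_add, ← hconv]
    simpa only [mixedConv_const hσ] using mixedConv_mono (ν := ν) hσ (hsub _) (.const v)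
      (fun z => sub_le_iff_le_add.2 (hmem.2 z).2) x

lemma mixedConv_phig_mem (hsupp : SuppIoo P V m M) (hV : Integrable V P) (hσ : 0 < σ)
    (hν : ∀ᵐ t ∂ν, 0 ≤ t) (hint : Integrable (fun t => t) ν) {g : ℝ → ℝ} (hg : Monotone g)
    (hmM : ∀ x, g x ∈ Ioo m M) (hδ : (∫ ω, V ω ∂P) + δ ≤ phip P V σ g 0) :
    mixedConv ν σ (phig P V σ g) ∈ profile (mixedConv ν σ step) m (∫ ω, V ω ∂P) M δ ∩
      {h | LipschitzWith (gq σ 0 * (M - m) * ∫ t, t ∂ν).toNNReal h} := by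
  have hmono := monotone_phig hsupp hV hσ hg hmM
  have hmem := phig_mem_Icc hsupp hV hσ hg.measurable hmM
  exact ⟨mixedConv_mem_profile hσ hν (.of_mem_Icc hmono.measurable hmem)
    ⟨monotone_phig_sub_mul_step hsupp hV hσ hg hmM hδ,
      phig_mem_Icc_step hsupp hV hσ hg.measurable hmM⟩,
    lipschitzWith_mixedConv hσ hν hint hmono hmem⟩

lemma exists_eq_mixedConv_phig (hsupp : SuppIoo P V m M) (hV : Integrable V P) (hσ : 0 < σ)
    (hν : ∀ᵐ t ∂ν, 0 ≤ t) (hν' : ∃ᵐ t ∂ν, 0 < t) (hint : Integrable (fun t => t) ν) :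
    ∃ F : ℝ → ℝ, StrictMono F ∧ (∃ L : ℝ≥0, LipschitzWith L F) ∧ (∀ x, F x ∈ Ioo m M) ∧
      mixedConv ν σ (phig P V σ F) = F := by
  set v := ∫ ω, V ω ∂P
  set s := mixedConv ν σ step
  set L := (gq σ 0 * (M - m) * ∫ t, t ∂ν).toNNReal
  have hs : StrictMono s := strictMono_mixedConv_step hσ hν hν'
  have hv : v ∈ Ioo m M := hsupp.integral_mem_Ioo hV
  have hlo : ∀ x, m + (v - m) * s x ∈ Ioo m v := fun x =>
    add_sub_mul_mem_Ioo (mixedConv_step_mem_Ioo hσ hν hν' x) hv.1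
  have hhi : ∀ x, v + (M - v) * s x ∈ Ioo v M := fun x =>
    add_sub_mul_mem_Ioo (mixedConv_step_mem_Ioo hσ hν hν' x) hv.2
  have hmono_lo : Monotone fun x => m + (v - m) * s x :=
    (hs.monotone.const_mul (sub_nonneg.2 hv.1.le)).const_add m
  obtain ⟨δ, hδ, hgap⟩ := exists_forall_integral_add_le_phip hsupp hV hσ hmono_lo.measurable
    ((hs.monotone.measurable.const_mul (M - v)).const_add v)
    (fun x => ⟨(hlo x).1, (hlo x).2.trans hv.2⟩) (fun x => ⟨hv.1.trans (hhi x).1, (hhi x).2⟩) 0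
  set K := profile s m v M δ ∩ {g | LipschitzWith L g}
  have hK : IsCompact K := isCompact_profile.inter_right (isClosed_setOfPred_lipschitzWith L)
  have hmono : ∀ g ∈ K, StrictMono g := fun g hg => strictMono_of_mem_profile hδ hs hg.1
  have hmM : ∀ g ∈ K, ∀ x, g x ∈ Ioo m M := fun g hg x =>
    ⟨(hlo x).1.trans_le (hg.1.2 x).1, (hg.1.2 x).2.trans_lt (hhi x).2⟩
  have hmaps : MapsTo (fun g => mixedConv ν σ (phig P V σ g)) K K := fun g hg =>
    mixedConv_phig_mem hsupp hV hσ hν hint (hmono g hg).monotone (hmM g hg)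
      (hgap g (hmono g hg).monotone.measurable hg.1.2)
  have hne : K.Nonempty := ⟨_, mixedConv_phig_mem hsupp hV hσ hν hint hmono_lo
    (fun x => ⟨(hlo x).1, (hlo x).2.trans hv.2⟩)
    (hgap _ hmono_lo.measurable fun x => ⟨le_rfl, (hlo x).2.le.trans (hhi x).1.le⟩)⟩
  obtain ⟨F, hF, hfix⟩ := exists_fixedPoint_of_convex_of_isCompact
    (convex_profile.inter (convex_setOf_lipschitzWith L)) hK hne
    (continuousOn_mixedConv_phig hsupp hV hσ hK (fun g hg => hg.2.continuous) hmono hmM) hmaps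
  exact ⟨F, hmono F hF, ⟨L, hF.2⟩, hmM F hF, hfix⟩

end FixedPoint

section MixingLaw

/-- The law of the dilation factor in equation (E): `1` with probability `1/N`, and otherwise
uniform on `(0, 1]`. -/
noncomputable def mixingLaw (N : ℕ) : Measure ℝ :=
  ENNReal.ofReal (1 / N) • Measure.dirac 1 +
    ENNReal.ofReal ((N - 1) / N) • volume.restrict (Ioc 0 1)

variable {σ : ℝ} {N : ℕ}

lemma isProbabilityMeasure_mixingLaw (hN : 1 ≤ N) : IsProbabilityMeasure (mixingLaw N) := by
  have hN' : (1 : ℝ) ≤ N := by exact_mod_cast hN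
  refine ⟨?_⟩
  simp only [mixingLaw, Measure.add_apply, Measure.smul_apply, measure_univ,
    Measure.restrict_apply_univ, Real.volume_Ioc, sub_zero, ENNReal.ofReal_one, smul_eq_mul,
    mul_one]
  rw [← ENNReal.ofReal_add (by positivity) (div_nonneg (sub_nonneg.2 hN') (by positivity)),
    ← add_div, add_sub_cancel, div_self (by positivity), ENNReal.ofReal_one]

lemma ae_mixingLaw_mem_Ioc (N : ℕ) : ∀ᵐ t ∂mixingLaw N, t ∈ Ioc (0 : ℝ) 1 := by
  refine ae_add_measure_iff.2 ⟨Measure.ae_smul_measure ?_ _, Measure.ae_smul_measure ?_ _⟩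
  · exact (ae_dirac_iff measurableSet_Ioc).2 (by simp)
  · exact ae_restrict_mem measurableSet_Ioc

lemma integrable_id_mixingLaw (hN : 1 ≤ N) : Integrable (fun t => t) (mixingLaw N) :=
  have := isProbabilityMeasure_mixingLaw hN
  .of_mem_Icc 0 1 aemeasurable_id
    ((ae_mixingLaw_mem_Ioc N).mono fun _ ht => Ioc_subset_Icc_self ht)

lemma gqbar_eq_integral (σ x z : ℝ) : gqbar σ x z = ∫ t in (0 : ℝ)..1, gq σ (t * x - z) := by
  unfold gqbar
  split_ifs with hx
  · simp [hx, gq]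
  · rw [intervalIntegral.integral_comp_mul_right (fun u => gq σ (u - z)) hx]
    simp

lemma integral_gq_mixingLaw (hN : 1 ≤ N) (σ x z : ℝ) :
    ∫ t, gq σ (t * x - z) ∂mixingLaw N =
      (1 / (N : ℝ)) * gq σ (x - z) + (((N : ℝ) - 1) / (N : ℝ)) * gqbar σ x z := by
  have hN' : (1 : ℝ) ≤ N := by exact_mod_cast hN
  have hcont : Continuous fun t => gq σ (t * x - z) := (continuous_gq σ).comp (by fun_prop)
  have hint : IntegrableOn (fun t => gq σ (t * x - z)) (Ioc 0 1) :=
    (hcont.intervalIntegrable 0 1).1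
  have hint_dirac : Integrable (fun t => gq σ (t * x - z)) (Measure.dirac 1) :=
    integrable_dirac' hcont.stronglyMeasurable enorm_lt_top
  rw [mixingLaw, integral_add_measure (hint_dirac.smul_measure ENNReal.ofReal_ne_top)
    (hint.smul_measure ENNReal.ofReal_ne_top), integral_smul_measure,
    integral_smul_measure, integral_dirac, ENNReal.toReal_ofReal (by positivity),
    ENNReal.toReal_ofReal (div_nonneg (sub_nonneg.2 hN') (by positivity)), one_mul,
    gqbar_eq_integral, intervalIntegral.integral_of_le zero_le_one, smul_eq_mul, smul_eq_mul]

end MixingLaw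

theorem stmt12_general {Ω : Type*} [MeasurableSpace Ω] (P : Measure Ω) [IsProbabilityMeasure P]
    (V : Ω → ℝ) (hV : Integrable V P) (m M : ℝ) (hsupp : SuppIoo P V m M) (σ : ℝ) (hσ : 0 < σ)
    (ν : Measure ℝ) [IsProbabilityMeasure ν] (hν : ∀ᵐ t ∂ν, 0 ≤ t) (hν' : ∃ᵐ t ∂ν, 0 < t)
    (hint : Integrable (fun t => t) ν) :
    ∃ F : ℝ → ℝ, StrictMono F ∧ (∃ L : NNReal, LipschitzWith L F) ∧ (∀ x, F x ∈ Ioo m M) ∧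
      ∀ x, F x = ∫ z, (∫ t, gq σ (t * x - z) ∂ν) * phig P V σ F z := by
  obtain ⟨F, hmono, hlip, hmM, hfix⟩ := exists_eq_mixedConv_phig hsupp hV hσ hν hν' hint
  have hphig : IsBddMeasurable (phig P V σ F) :=
    .of_mem_Icc (monotone_phig hsupp hV hσ hmono.monotone hmM).measurable
      (phig_mem_Icc hsupp hV hσ hmono.monotone.measurable hmM)
  refine ⟨F, hmono, hlip, hmM, fun x => ?_⟩
  rw [integral_mixed_gq_mul hσ hphig, hfix]

/-- For any `σ > 0` and integer `N ≥ 1` there exists a nondecreasing,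
Lipschitz-continuous solution of (E) with values in `(m, M)`. -/
theorem stmt12 {Ω : Type*} [MeasurableSpace Ω] (P : Measure Ω) [IsProbabilityMeasure P]
    (V : Ω → ℝ) (hVmeas : Measurable V) (hV : Integrable V P)
    (m M : ℝ) (hsupp : SuppIoo P V m M)
    (σ : ℝ) (hσ : 0 < σ) (N : ℕ) (hN : 1 ≤ N) :
    ∃ F : ℝ → ℝ, Monotone F ∧ (∃ K : NNReal, LipschitzWith K F) ∧
      (∀ x, F x ∈ Set.Ioo m M) ∧ SolvesE P V σ N F := by
  have := isProbabilityMeasure_mixingLaw hN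
  obtain ⟨F, hmono, hlip, hmM, hF⟩ := stmt12_general P V hV m M hsupp σ hσ (mixingLaw N)
    ((ae_mixingLaw_mem_Ioc N).mono fun _ ht => ht.1.le)
    ((ae_mixingLaw_mem_Ioc N).mono fun _ ht => ht.1).frequently (integrable_id_mixingLaw hN)
  exact ⟨F, hmono.monotone, hlip, hmM, by simpa only [SolvesE, integral_gq_mixingLaw hN] using hF⟩
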